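/- Fix an integer k ≥ 1. There exist positive constants C₁, C₂ (depending only on k) and a function ε : ℕ → ℝ with ε(n) → 0 as n → ∞ such that the number p_{ℙ_k}(n) of partitions of n with all parts in ℙ_k satisfies p_{ℙ_k}(n) ~ C₁ · n^{-(2k+1)/(2k+2)} · (log n)^{-k/(2k+2)} · exp( C₂ · n^{1/(k+1)} · (log n)^{-k/(k+1)} · (1 + ε(n)) ) as n → ∞. -/

import Mathlib

/-!
Since `ε` is an arbitrary null function, the claim is equivalent to positivity of `pPk k n` for large
`n` together with `log (pPk k n) ~ C₂ n ^ (1 / (k + 1)) (log n) ^ (-k / (k + 1))` (`tendsto_log_pPk`):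
the powers of `n` and `log n` in front of the exponential only contribute `O(log n)` to the logarithm.

The logarithmic asymptotics follow from the generating function
`∑ pPk k n e ^ (-s n) = ∏_p (1 - e ^ (-s p ^ k))⁻¹ = exp (logEuler k s)` (`hasSum_pPk`), obtained from
the Euler product of the completely multiplicative function `m ↦ e ^ (-s wt k m)`, where `wt k m` is
the sum of `p ^ k` over the prime factors `p` of `m`. Writing `logEuler k s` as an integral of the prime
counting function against `1 / (e ^ x - 1)`, the prime number theorem gives
`logEuler k s ~ A s ^ (-1 / k) / log (1 / s)` as `s → 0` (`tendsto_logEuler`). The Tauberian theorem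
`tauber`, evaluated near the approximate saddle point `s = (B / (n log n)) ^ (k / (k + 1))`, transfers
this to the coefficients. It requires the coefficients to be monotone along large steps, which holds
because every large integer is a sum of parts `2 ^ k` and `3 ^ k` (`exists_pPk_mono`).

The prime number theorem (`tendsto_primeCounting`) is proved by the Wiener–Ikehara method. The Laplace
transform of `ψ(e ^ t) e ^ (-t) - 1` extends continuously to the imaginary axis because `ζ` has no zero
on `re s = 1`; by the Riemann–Lebesgue lemma all Fejér averages of this function tend to `0`
(`tendsto_smoothing`), and slow decrease of `ψ(e ^ t) e ^ (-t)` removes the averaging (`tendsto_psiN`).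
-/

open Filter

/-- Number of partitions of `n` with all parts `k`-th powers of primes. -/
noncomputable def pPk (k n : ℕ) : ℕ :=
  Nat.card {P : n.Partition // ∀ i ∈ P.parts, ∃ p : ℕ, p.Prime ∧ i = p ^ k}

section

open MeasureTheory Set Topology

/-! ### The Chebyshev function and its Laplace transform -/

/-- The Chebyshev function in logarithmic scale, normalised to have limit `1`: `ψ(e ^ t) e ^ (-t)`. -/
noncomputable def psiN (t : ℝ) : ℝ := Chebyshev.psi (Real.exp t) * Real.exp (-t)

lemma psiN_nonneg (t : ℝ) : 0 ≤ psiN t :=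
  mul_nonneg (Chebyshev.psi_nonneg _) (Real.exp_pos _).le

lemma psiN_le (t : ℝ) : psiN t ≤ Real.log 4 + 4 := by
  have h := Chebyshev.psi_le_const_mul_self (Real.exp_pos t).le
  calc psiN t ≤ (Real.log 4 + 4) * Real.exp t * Real.exp (-t) :=
        mul_le_mul_of_nonneg_right h (Real.exp_pos _).le
    _ = Real.log 4 + 4 := by rw [mul_assoc, ← Real.exp_add]; simp

lemma measurable_psiN : Measurable psiN :=
  (Chebyshev.psi_mono.measurable.comp Real.measurable_exp).mul
    (Real.measurable_exp.comp measurable_neg)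

/-- Slow decrease: `e ^ t * psiN t = ψ(e ^ t)` is monotone. This is the Tauberian condition which
turns convergence of averages of `psiN` into convergence of `psiN` itself. -/
lemma psiN_slow {s t : ℝ} (h : s ≤ t) : psiN s ≤ Real.exp (t - s) * psiN t := by
  have h1 : Chebyshev.psi (Real.exp s) ≤ Chebyshev.psi (Real.exp t) :=
    Chebyshev.psi_mono (Real.exp_le_exp.2 h)
  calc psiN s ≤ Chebyshev.psi (Real.exp t) * Real.exp (-s) :=
        mul_le_mul_of_nonneg_right h1 (Real.exp_pos _).le
    _ = Real.exp (t - s) * psiN t := by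
        unfold psiN
        rw [mul_left_comm, ← Real.exp_add]; congr 2; ring

/-- Minus the logarithmic derivative of `ζ`, minus `1 / (s - 1)`; it is continuous on the closed half
plane `1 ≤ re s`, as `ζ` does not vanish on the line `re s = 1`. It is Mathlib's auxiliary
function for primes in residue classes, at modulus `1`. -/
noncomputable def zetaAux (s : ℂ) : ℂ :=
  ArithmeticFunction.vonMangoldt.LFunctionResidueClassAux (q := 1) 1 s

lemma continuousOn_zetaAux : ContinuousOn zetaAux {s | 1 ≤ s.re} :=
  ArithmeticFunction.vonMangoldt.continuousOn_LFunctionResidueClassAux (q := 1) 1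

lemma zetaAux_eq {s : ℂ} (hs : 1 < s.re) :
    zetaAux s = LSeries (fun n => (ArithmeticFunction.vonMangoldt n : ℂ)) s - 1 / (s - 1) := by
  have := ArithmeticFunction.vonMangoldt.eqOn_LFunctionResidueClassAux (q := 1) (a := 1)
    isUnit_one hs
  rw [zetaAux, this]
  have h2 : ArithmeticFunction.vonMangoldt.residueClass (1 : ZMod 1)
      = fun n => ArithmeticFunction.vonMangoldt n := by
    ext n
    rw [ArithmeticFunction.vonMangoldt.residueClass, Set.indicator_of_mem]
    exact Subsingleton.elim _ _
  simp [h2]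

/-- The Laplace transform of `psiN - 1`, continued to the closed half plane `0 ≤ re z`. -/
noncomputable def lapAux (z : ℂ) : ℂ := (zetaAux (1 + z) - 1) / (1 + z)

lemma continuousOn_lapAux : ContinuousOn lapAux {z | 0 ≤ z.re} := by
  unfold lapAux
  refine ContinuousOn.div ((continuousOn_zetaAux.comp (by fun_prop) ?_).sub continuousOn_const)
    (by fun_prop) ?_
  · intro z hz; simpa using hz
  · intro z hz h
    have := congrArg Complex.re h
    simp at this hz
    linarith

lemma integrable_bdd_exp {f : ℝ → ℂ} (hf : Measurable f) {C : ℝ} (hC : ∀ t, ‖f t‖ ≤ C)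
    {z : ℂ} (hz : 0 < z.re) :
    IntegrableOn (fun t : ℝ => f t * Complex.exp (-z * t)) (Ioi 0) := by
  have h1 : IntegrableOn (fun t : ℝ => Complex.exp (-z * t)) (Ioi 0) :=
    integrableOn_exp_mul_complex_Ioi (by simpa using hz) 0
  exact h1.bdd_mul hf.aestronglyMeasurable (ae_of_all _ hC)

/-- Abel summation of `∑ Λ(n) n ^ (-1 - z)` followed by the substitution `x = e ^ t`. -/
lemma laplace_psiN {z : ℂ} (hz : 0 < z.re) :
    ∫ t in Ioi (0 : ℝ), ((psiN t : ℂ) - 1) * Complex.exp (-z * t) = lapAux z := by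
  have hs : 1 < (1 + z).re := by simpa using hz
  have hz0 : z ≠ 0 := by rintro rfl; simp at hz
  have hz1 : 1 + z ≠ 0 := by
    intro h; rw [h] at hs; simp at hs; linarith
  have hO : (fun n : ℕ ↦ ∑ k ∈ Finset.Icc 1 n, ArithmeticFunction.vonMangoldt k)
      =O[atTop] fun n : ℕ ↦ (n : ℝ) ^ (1 : ℝ) := by
    refine Asymptotics.IsBigO.of_bound (Real.log 4 + 4) (Eventually.of_forall fun n => ?_)
    have := Chebyshev.psi_le_const_mul_self (Nat.cast_nonneg (α := ℝ) n)
    rw [Chebyshev.psi, Nat.floor_natCast] at this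
    rw [Real.rpow_one, Real.norm_of_nonneg (Finset.sum_nonneg fun _ _ =>
      ArithmeticFunction.vonMangoldt_nonneg), Real.norm_of_nonneg (Nat.cast_nonneg _)]
    exact this
  have h1 := LSeries_eq_mul_integral_of_nonneg (fun n => ArithmeticFunction.vonMangoldt n)
    zero_le_one hs hO (fun n => ArithmeticFunction.vonMangoldt_nonneg)
  have h2 := integral_comp_exp_Ioi (fun t : ℝ => (∑ k ∈ Finset.Icc 1 ⌊t⌋₊,
    (ArithmeticFunction.vonMangoldt k : ℂ)) * (t : ℂ) ^ (-(1 + z + 1))) 0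
  rw [Real.exp_zero] at h2
  rw [← h2] at h1
  have h3 : ∀ t : ℝ, Real.exp t • ((∑ k ∈ Finset.Icc 1 ⌊Real.exp t⌋₊,
      (ArithmeticFunction.vonMangoldt k : ℂ)) * ((Real.exp t : ℝ) : ℂ) ^ (-(1 + z + 1)))
      = psiN t * Complex.exp (-z * t) := by
    intro t
    have e1 : (∑ k ∈ Finset.Icc 1 ⌊Real.exp t⌋₊, (ArithmeticFunction.vonMangoldt k : ℂ))
        = (Chebyshev.psi (Real.exp t) : ℂ) := by
      rw [Chebyshev.psi]; push_cast; rfl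
    have e2 : ((Real.exp t : ℝ) : ℂ) ^ (-(1 + z + 1)) = Complex.exp (-(1 + z + 1) * t) := by
      rw [Complex.cpow_def_of_ne_zero (by exact_mod_cast (Real.exp_pos t).ne'),
        ← Complex.ofReal_log (Real.exp_pos t).le, Real.log_exp, mul_comm]
    rw [e1, e2, psiN]
    push_cast
    rw [Complex.real_smul, mul_left_comm, mul_assoc]
    push_cast
    rw [← Complex.exp_add, ← Complex.exp_add]
    congr 2; ring
  simp_rw [h3] at h1
  have hb : ∀ t, ‖(psiN t : ℂ)‖ ≤ Real.log 4 + 4 := fun t => by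
    rw [Complex.norm_real, Real.norm_of_nonneg (psiN_nonneg t)]; exact psiN_le t
  have i1 := integrable_bdd_exp (f := fun t => (psiN t : ℂ))
    (Complex.measurable_ofReal.comp measurable_psiN) hb hz
  have i2 : IntegrableOn (fun t : ℝ => Complex.exp (-z * t)) (Ioi 0) :=
    integrableOn_exp_mul_complex_Ioi (by simpa using hz) 0
  simp_rw [sub_mul, one_mul]
  rw [integral_sub i1 i2, integral_exp_mul_complex_Ioi (by simpa using hz) 0]
  have h4 := zetaAux_eq hs
  rw [h1] at h4
  rw [lapAux, h4]
  have : 1 + z - 1 = z := by ring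
  rw [this]
  simp
  field_simp
  ring

/-! ### Fejér averages and boundary values of Laplace transforms -/

/-- The Fejér kernel `2 (1 - cos x) / x ^ 2`. Division by zero gives it the value `0`, rather than `1`,
at `x = 0`, which does not affect integrals. -/
noncomputable def fejer (x : ℝ) : ℝ := 2 * (1 - Real.cos x) / x ^ 2

lemma fejer_nonneg (x : ℝ) : 0 ≤ fejer x :=
  div_nonneg (by linarith [Real.cos_le_one x]) (sq_nonneg x)

lemma fejer_le (x : ℝ) : fejer x ≤ 5 * (1 + x ^ 2)⁻¹ := by
  rcases eq_or_ne x 0 with rfl | hx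
  · simp [fejer]
  have h1 := Real.one_sub_sq_div_two_le_cos (x := x)
  have h2 := Real.neg_one_le_cos x
  have hx2 : 0 < x ^ 2 := by positivity
  rw [fejer, ← div_eq_mul_inv, div_le_div_iff₀ hx2 (by positivity)]
  nlinarith

lemma measurable_fejer : Measurable fejer := by
  unfold fejer
  exact (measurable_const.mul (measurable_const.sub Real.measurable_cos)).div
    (measurable_id.pow_const 2)

lemma integrable_fejer : Integrable fejer :=
  (integrable_inv_one_add_sq.const_mul 5).mono' measurable_fejer.aestronglyMeasurable
    (ae_of_all _ fun x => by rw [Real.norm_of_nonneg (fejer_nonneg x)]; exact fejer_le x)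

lemma integral_fejer_pos : 0 < ∫ x, fejer x := by
  rw [integral_pos_iff_support_of_nonneg fejer_nonneg integrable_fejer]
  refine lt_of_lt_of_le ?_ (measure_mono (s := Ioo (0 : ℝ) 1) ?_)
  · simp
  · intro x hx
    have h1 : Real.cos x < 1 := by
      have := Real.cos_lt_cos_of_nonneg_of_le_pi le_rfl
        (hx.2.le.trans (by linarith [Real.pi_gt_three])) hx.1
      simpa using this
    have : 0 < fejer x := div_pos (by linarith) (pow_pos hx.1 2)
    exact this.ne'

/-- Away from `0` the Fejér kernel is the Fourier transform of the triangle function `1 - |l|` on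
`[-1, 1]`. -/
lemma fejer_eq {x : ℝ} (hx : x ≠ 0) :
    (fejer x : ℂ) = ∫ l in Ioc (-1 : ℝ) 1,
      ((1 - |l| : ℝ) : ℂ) * Complex.exp (Complex.I * l * x) := by
  have hc : Complex.I * x ≠ 0 := mul_ne_zero Complex.I_ne_zero (by exact_mod_cast hx)
  set c : ℂ := Complex.I * x with hcdef
  have hcont : Continuous fun l : ℝ => ((1 - |l| : ℝ) : ℂ) * Complex.exp (Complex.I * l * x) := by
    fun_prop
  rw [← intervalIntegral.integral_of_le (by norm_num),
    ← intervalIntegral.integral_add_adjacent_intervals (b := 0)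
      (hcont.intervalIntegrable _ _) (hcont.intervalIntegrable _ _)]
  have i1 : ∫ l in (-1 : ℝ)..0, ((1 - |l| : ℝ) : ℂ) * Complex.exp (Complex.I * l * x)
      = 1 / c - 1 / c ^ 2 + Complex.exp (-c) / c ^ 2 := by
    have hd : ∀ l ∈ uIcc (-1 : ℝ) 0, HasDerivAt
        (fun l : ℝ => (1 + (l : ℂ)) * Complex.exp (c * l) / c - Complex.exp (c * l) / c ^ 2)
        ((1 + (l : ℂ)) * Complex.exp (c * l)) l := by
      intro l _
      have h0 : HasDerivAt (fun l : ℝ => (l : ℂ)) 1 l := Complex.ofRealCLM.hasDerivAt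
      have h1 : HasDerivAt (fun l : ℝ => Complex.exp (c * l)) (Complex.exp (c * l) * (c * 1)) l :=
        (h0.const_mul c).cexp
      have h2 := (((h0.const_add 1).mul h1).div_const c).sub (h1.div_const (c ^ 2))
      refine HasDerivAt.congr_deriv h2 ?_
      field_simp
      ring
    have := intervalIntegral.integral_eq_sub_of_hasDerivAt hd
      ((by fun_prop : Continuous fun l : ℝ => (1 + (l : ℂ)) * Complex.exp (c * l)).intervalIntegrable _ _)
    rw [show (∫ l in (-1 : ℝ)..0, ((1 - |l| : ℝ) : ℂ) * Complex.exp (Complex.I * l * x))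
      = ∫ l in (-1 : ℝ)..0, (1 + (l : ℂ)) * Complex.exp (c * l) from ?_, this]
    · simp
    · refine intervalIntegral.integral_congr fun l hl => ?_
      rw [uIcc_of_le (by norm_num)] at hl
      simp only [abs_of_nonpos hl.2, hcdef]
      push_cast
      congr 1
      · ring
      · congr 1; ring
  have i2 : ∫ l in (0 : ℝ)..1, ((1 - |l| : ℝ) : ℂ) * Complex.exp (Complex.I * l * x)
      = Complex.exp c / c ^ 2 - 1 / c - 1 / c ^ 2 := by
    have hd : ∀ l ∈ uIcc (0 : ℝ) 1, HasDerivAt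
        (fun l : ℝ => (1 - (l : ℂ)) * Complex.exp (c * l) / c + Complex.exp (c * l) / c ^ 2)
        ((1 - (l : ℂ)) * Complex.exp (c * l)) l := by
      intro l _
      have h0 : HasDerivAt (fun l : ℝ => (l : ℂ)) 1 l := Complex.ofRealCLM.hasDerivAt
      have h1 : HasDerivAt (fun l : ℝ => Complex.exp (c * l)) (Complex.exp (c * l) * (c * 1)) l :=
        (h0.const_mul c).cexp
      have h2 := (((h0.const_sub 1).mul h1).div_const c).add (h1.div_const (c ^ 2))
      refine HasDerivAt.congr_deriv h2 ?_
      field_simp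
      ring
    have := intervalIntegral.integral_eq_sub_of_hasDerivAt hd
      ((by fun_prop : Continuous fun l : ℝ => (1 - (l : ℂ)) * Complex.exp (c * l)).intervalIntegrable _ _)
    rw [show (∫ l in (0 : ℝ)..1, ((1 - |l| : ℝ) : ℂ) * Complex.exp (Complex.I * l * x))
      = ∫ l in (0 : ℝ)..1, (1 - (l : ℂ)) * Complex.exp (c * l) from ?_, this]
    · simp
      ring
    · refine intervalIntegral.integral_congr fun l hl => ?_
      rw [uIcc_of_le (by norm_num)] at hl
      simp only [abs_of_nonneg hl.1, hcdef]
      push_cast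
      congr 2; ring
  rw [i1, i2, fejer]
  have hcos : Complex.exp c + Complex.exp (-c) = 2 * Complex.cos x := by
    rw [Complex.cos, hcdef, mul_comm Complex.I, neg_mul]; ring
  have hc2 : c ^ 2 = -(x : ℂ) ^ 2 := by rw [hcdef, mul_pow, Complex.I_sq]; ring
  have hx' : (x : ℂ) ≠ 0 := by exact_mod_cast hx
  have : 1 / c - 1 / c ^ 2 + Complex.exp (-c) / c ^ 2 +
      (Complex.exp c / c ^ 2 - 1 / c - 1 / c ^ 2)
      = (Complex.exp c + Complex.exp (-c) - 2) / c ^ 2 := by ring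
  rw [this, hcos, hc2]
  push_cast
  field_simp
  ring

lemma integrable_fejer_comp {R : ℝ} (hR : 0 < R) (u : ℝ) :
    Integrable fun t : ℝ => fejer (R * (u - t)) := by
  have h1 : Integrable fun t : ℝ => fejer (R * t) :=
    (integrable_comp_mul_left_iff fejer hR.ne').2 integrable_fejer
  exact h1.comp_sub_left u

/-- The Fejér average of `f t * exp (-σ t)` around `u` is a Fourier integral, over a bounded segment of
the line `re z = σ`, of the Laplace transform `G` of `f`. -/
lemma smoothing_pos {f : ℝ → ℂ} (hf : Measurable f) {C : ℝ} (hC : ∀ t, ‖f t‖ ≤ C)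
    {G : ℂ → ℂ}
    (hL : ∀ z : ℂ, 0 < z.re → ∫ t in Ioi (0 : ℝ), f t * Complex.exp (-z * t) = G z)
    {R : ℝ} (hR : 0 < R) (u : ℝ) {σ : ℝ} (hσ : 0 < σ) :
    ∫ t in Ioi (0 : ℝ), f t * Complex.exp (-σ * t) * (fejer (R * (u - t)) : ℂ)
      = ∫ l in Ioc (-1 : ℝ) 1, ((1 - |l| : ℝ) : ℂ) * Complex.exp (Complex.I * l * (R * u)) *
          G (σ + Complex.I * l * R) := by
  have e1 : ∀ᵐ t ∂(volume.restrict (Ioi (0 : ℝ))),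
      f t * Complex.exp (-σ * t) * (fejer (R * (u - t)) : ℂ)
      = ∫ l in Ioc (-1 : ℝ) 1, f t * Complex.exp (-σ * t) *
        (((1 - |l| : ℝ) : ℂ) * Complex.exp (Complex.I * l * (R * (u - t) : ℝ))) := by
    have : ∀ᵐ t ∂(volume.restrict (Ioi (0 : ℝ))), t ≠ u := by
      refine ae_restrict_of_ae ?_
      exact Measure.ae_ne volume u
    filter_upwards [this] with t ht
    have hne : R * (u - t) ≠ 0 := mul_ne_zero hR.ne' (sub_ne_zero.2 ht.symm)
    rw [fejer_eq hne, integral_const_mul]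
  rw [integral_congr_ae e1, integral_integral_swap]
  · refine integral_congr_ae (ae_of_all _ fun l => ?_)
    have hre : 0 < ((σ : ℂ) + Complex.I * l * R).re := by simpa using hσ
    simp only
    rw [← hL _ hre, ← integral_const_mul]
    refine integral_congr_ae (ae_of_all _ fun t => ?_)
    simp only
    have : Complex.exp (-σ * t) * Complex.exp (Complex.I * l * (R * (u - t) : ℝ))
        = Complex.exp (Complex.I * l * (R * u)) *
          Complex.exp (-((σ : ℂ) + Complex.I * l * R) * t) := by
      rw [← Complex.exp_add, ← Complex.exp_add]; congr 1; push_cast; ring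
    linear_combination (f t * ((1 - |l| : ℝ) : ℂ)) * this
  · have a1 : Integrable (fun t : ℝ => f t * Complex.exp (-(σ : ℂ) * t))
        (volume.restrict (Ioi (0 : ℝ))) :=
      integrable_bdd_exp hf hC (by simpa using hσ)
    have a2 : Integrable (fun l : ℝ => ((1 - |l| : ℝ) : ℂ))
        (volume.restrict (Ioc (-1 : ℝ) 1)) :=
      ((by fun_prop : Continuous fun l : ℝ => ((1 - |l| : ℝ) : ℂ)).integrableOn_Icc).mono_set
        Ioc_subset_Icc_self
    have a3 := a1.mul_prod a2
    have a4 : Continuous fun p : ℝ × ℝ =>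
        Complex.exp (Complex.I * p.2 * (R * (u - p.1) : ℝ)) := by fun_prop
    have a5 := a3.mul_bdd (c := 1) a4.aestronglyMeasurable (ae_of_all _ fun p => by
      rw [show Complex.I * p.2 * (R * (u - p.1) : ℝ) = ((p.2 * (R * (u - p.1)) : ℝ) : ℂ) * Complex.I
        by push_cast; ring, Complex.norm_exp_ofReal_mul_I])
    refine a5.congr (ae_of_all _ fun p => ?_)
    simp only [Function.uncurry]
    ring

/-- The case `σ = 0` of `smoothing_pos`, by letting `σ` decrease to `0`: only continuity of `G` up to
the imaginary axis is needed. -/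
lemma smoothing_eq {f : ℝ → ℂ} (hf : Measurable f) {C : ℝ} (hC : ∀ t, ‖f t‖ ≤ C)
    {G : ℂ → ℂ} (hG : ContinuousOn G {z | 0 ≤ z.re})
    (hL : ∀ z : ℂ, 0 < z.re → ∫ t in Ioi (0 : ℝ), f t * Complex.exp (-z * t) = G z)
    {R : ℝ} (hR : 0 < R) (u : ℝ) :
    ∫ t in Ioi (0 : ℝ), f t * (fejer (R * (u - t)) : ℂ)
      = ∫ l in Ioc (-1 : ℝ) 1, ((1 - |l| : ℝ) : ℂ) * Complex.exp (Complex.I * l * (R * u)) *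
          G (Complex.I * l * R) := by
  have hC0 : 0 ≤ C := (norm_nonneg _).trans (hC 0)
  have hlim1 : Tendsto (fun σ : ℝ => ∫ t in Ioi (0 : ℝ),
      f t * Complex.exp (-σ * t) * (fejer (R * (u - t)) : ℂ)) (𝓝[>] 0)
      (𝓝 (∫ t in Ioi (0 : ℝ), f t * (fejer (R * (u - t)) : ℂ))) := by
    refine tendsto_integral_filter_of_dominated_convergence
      (fun t => C * fejer (R * (u - t))) ?_ ?_ ?_ ?_
    · refine Eventually.of_forall fun σ => ?_
      have m1 : Measurable fun t : ℝ => Complex.exp (-σ * t) := by fun_prop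
      have m2 : Measurable fun t : ℝ => (fejer (R * (u - t)) : ℂ) :=
        Complex.measurable_ofReal.comp (measurable_fejer.comp (by fun_prop))
      exact ((hf.mul m1).mul m2).aestronglyMeasurable
    · filter_upwards [self_mem_nhdsWithin] with σ hσ
      refine (ae_restrict_iff' measurableSet_Ioi).2 (ae_of_all _ fun t ht => ?_)
      rw [norm_mul, norm_mul, Complex.norm_real, Real.norm_of_nonneg (fejer_nonneg _)]
      refine mul_le_mul_of_nonneg_right ?_ (fejer_nonneg _)
      have : ‖Complex.exp (-σ * t)‖ ≤ 1 := by
        rw [Complex.norm_exp]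
        simp only [neg_mul, Complex.neg_re, Complex.mul_re, Complex.ofReal_re, Complex.ofReal_im,
          mul_zero, sub_zero]
        exact Real.exp_le_one_iff.2 (by have := mul_pos (mem_Ioi.1 hσ) (mem_Ioi.1 ht); linarith)
      calc _ ≤ C * 1 := mul_le_mul (hC t) this (norm_nonneg _) hC0
        _ = C := mul_one C
    · exact ((integrable_fejer_comp hR u).const_mul C).integrableOn
    · refine ae_of_all _ fun t => ?_
      refine Tendsto.mul_const _ ?_
      have : ContinuousAt (fun σ : ℝ => f t * Complex.exp (-σ * t)) 0 := by fun_prop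
      have h := this.tendsto
      simp only [Complex.ofReal_zero, neg_zero, zero_mul, Complex.exp_zero, mul_one] at h
      exact h.mono_left nhdsWithin_le_nhds
  have hlim2 : Tendsto (fun σ : ℝ => ∫ l in Ioc (-1 : ℝ) 1,
      ((1 - |l| : ℝ) : ℂ) * Complex.exp (Complex.I * l * (R * u)) *
          G (σ + Complex.I * l * R)) (𝓝[>] 0)
      (𝓝 (∫ l in Ioc (-1 : ℝ) 1, ((1 - |l| : ℝ) : ℂ) * Complex.exp (Complex.I * l * (R * u)) *
          G (Complex.I * l * R))) := by
    have hcont : ContinuousOn (fun p : ℝ × ℝ => G (p.1 + Complex.I * p.2 * R))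
        (Icc 0 1 ×ˢ Icc (-1) 1) := by
      refine hG.comp (by fun_prop) ?_
      rintro ⟨σ, l⟩ ⟨h1, -⟩
      simpa using h1.1
    obtain ⟨D, hD⟩ := (isCompact_Icc.prod isCompact_Icc).exists_bound_of_continuousOn hcont
    refine tendsto_integral_filter_of_dominated_convergence (fun _ => D) ?_ ?_ ?_ ?_
    · filter_upwards [self_mem_nhdsWithin] with σ hσ
      refine ContinuousOn.aestronglyMeasurable ?_ measurableSet_Ioc
      refine ContinuousOn.mul (by fun_prop) (hG.comp (by fun_prop) ?_)
      intro l _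
      have : (0 : ℝ) ≤ σ := le_of_lt hσ
      simpa using this
    · filter_upwards [Ioc_mem_nhdsGT zero_lt_one] with σ hσ
      refine (ae_restrict_iff' measurableSet_Ioc).2 (ae_of_all _ fun l hl => ?_)
      have h1 : ‖((1 - |l| : ℝ) : ℂ)‖ ≤ 1 := by
        rw [Complex.norm_real, Real.norm_eq_abs, abs_le]
        have := abs_le.2 ⟨hl.1.le, hl.2⟩
        constructor <;> linarith [abs_nonneg l]
      have h2 : ‖Complex.exp (Complex.I * l * (R * u))‖ = 1 := by
        rw [show Complex.I * l * (R * u) = ((l * (R * u) : ℝ) : ℂ) * Complex.I by push_cast; ring,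
          Complex.norm_exp_ofReal_mul_I]
      rw [norm_mul, norm_mul, h2, mul_one]
      have h3 := hD (σ, l) ⟨⟨hσ.1.le, hσ.2⟩, ⟨hl.1.le, hl.2⟩⟩
      calc _ ≤ 1 * D := mul_le_mul h1 h3 (norm_nonneg _) zero_le_one
        _ = D := one_mul D
    · exact integrable_const D
    · refine ae_of_all _ fun l => ?_
      refine Tendsto.const_mul _ ?_
      have h0 : ContinuousWithinAt G {z | 0 ≤ z.re} (Complex.I * l * R) :=
        hG _ (by simp)
      refine h0.tendsto.comp (tendsto_nhdsWithin_iff.2 ⟨?_, ?_⟩)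
      · have : ContinuousAt (fun σ : ℝ => (σ : ℂ) + Complex.I * l * R) 0 := by fun_prop
        have h := this.tendsto
        simp only [Complex.ofReal_zero, zero_add] at h
        exact h.mono_left nhdsWithin_le_nhds
      · filter_upwards [self_mem_nhdsWithin] with σ hσ
        have : (0 : ℝ) ≤ σ := le_of_lt hσ
        simpa using this
  refine tendsto_nhds_unique hlim1 (hlim2.congr' ?_)
  filter_upwards [self_mem_nhdsWithin] with σ hσ
  exact (smoothing_pos hf hC hL hR u hσ).symm

/-- If the Laplace transform of a bounded `f` extends continuously to the imaginary axis, all Fejér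
averages of `f` tend to `0`, by the Riemann–Lebesgue lemma applied to `smoothing_eq`. -/
lemma tendsto_smoothing {f : ℝ → ℂ} (hf : Measurable f) {C : ℝ} (hC : ∀ t, ‖f t‖ ≤ C)
    {G : ℂ → ℂ} (hG : ContinuousOn G {z | 0 ≤ z.re})
    (hL : ∀ z : ℂ, 0 < z.re → ∫ t in Ioi (0 : ℝ), f t * Complex.exp (-z * t) = G z)
    {R : ℝ} (hR : 0 < R) :
    Tendsto (fun u : ℝ => ∫ t in Ioi (0 : ℝ), f t * (fejer (R * (u - t)) : ℂ)) atTop (𝓝 0) := by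
  simp_rw [smoothing_eq hf hC hG hL hR]
  have h := Real.tendsto_integral_exp_smul_cocompact
    ((Ioc (-1 : ℝ) 1).indicator fun l : ℝ => ((1 - |l| : ℝ) : ℂ) * G (Complex.I * l * R))
  have h2 : Tendsto (fun u : ℝ => -(R * u / (2 * Real.pi))) atTop (cocompact ℝ) := by
    refine Tendsto.mono_right ?_ atBot_le_cocompact
    refine tendsto_neg_atTop_atBot.comp ?_
    exact (tendsto_id.const_mul_atTop hR).atTop_div_const (by positivity)
  refine (h.comp h2).congr fun u => ?_
  simp only [Function.comp]
  rw [← integral_indicator measurableSet_Ioc]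
  refine integral_congr_ae (ae_of_all _ fun l => ?_)
  by_cases hl : l ∈ Ioc (-1 : ℝ) 1
  · simp only [indicator_of_mem hl]
    rw [Circle.smul_def, Real.fourierChar_apply, smul_eq_mul]
    have : ((2 * Real.pi * -(l * -(R * u / (2 * Real.pi))) : ℝ) : ℂ) * Complex.I
        = Complex.I * l * (R * u) := by
      have hpi : (Real.pi : ℂ) ≠ 0 := by exact_mod_cast Real.pi_ne_zero
      push_cast
      field_simp
    rw [this]
    ring
  · simp only [indicator_of_notMem hl, smul_zero]

/-! ### The prime number theorem -/

lemma psiN_of_nonpos {t : ℝ} (ht : t ≤ 0) : psiN t = 0 := by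
  rw [psiN, Chebyshev.psi_eq_zero_of_le_one (Real.exp_le_one_iff.2 ht), zero_mul]

lemma integrable_psiN_fejer {R : ℝ} (hR : 0 < R) (u : ℝ) :
    Integrable fun y : ℝ => psiN (u - y) * fejer (R * y) := by
  have h1 : Integrable fun t : ℝ => fejer (R * t) :=
    (integrable_comp_mul_left_iff fejer hR.ne').2 integrable_fejer
  refine h1.bdd_mul (c := Real.log 4 + 4)
    (measurable_psiN.comp (by fun_prop : Measurable fun y : ℝ => u - y)).aestronglyMeasurable
    (ae_of_all _ fun y => ?_)
  rw [Real.norm_of_nonneg (psiN_nonneg _)]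
  exact psiN_le _

/-- All Fejér averages of `psiN` around `u` tend to the total mass of the kernel as `u → ∞`. -/
lemma tendsto_psiN_fejer {R : ℝ} (hR : 0 < R) :
    Tendsto (fun u : ℝ => ∫ y, psiN (u - y) * fejer (R * y)) atTop
      (𝓝 (∫ y, fejer (R * y))) := by
  have h_int : Integrable fun t : ℝ => fejer (R * t) :=
    (integrable_comp_mul_left_iff fejer hR.ne').2 integrable_fejer
  have hm : Measurable fun t : ℝ => ((psiN t : ℂ) - 1) :=
    (Complex.measurable_ofReal.comp measurable_psiN).sub measurable_const
  have hb : ∀ t, ‖(psiN t : ℂ) - 1‖ ≤ Real.log 4 + 4 + 1 := fun t => by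
    refine (norm_sub_le _ _).trans ?_
    rw [Complex.norm_real, Real.norm_of_nonneg (psiN_nonneg t)]
    simpa using psiN_le t
  have h1 := tendsto_smoothing hm hb continuousOn_lapAux (fun z hz => laplace_psiN hz) hR
  have h1' : Tendsto (fun u : ℝ => ∫ t in Ioi (0 : ℝ), (psiN t - 1) * fejer (R * (u - t)))
      atTop (𝓝 0) := by
    have h2 := (Complex.continuous_re.tendsto _).comp h1
    refine (h2.congr fun u => ?_)
    simp only [Function.comp]
    have : ∀ t : ℝ, ((psiN t : ℂ) - 1) * (fejer (R * (u - t)) : ℂ)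
        = (((psiN t - 1) * fejer (R * (u - t)) : ℝ) : ℂ) := fun t => by push_cast; ring
    simp_rw [this]
    rw [integral_complex_ofReal, Complex.ofReal_re]
  have h3 : Tendsto (fun u : ℝ => ∫ t in Ioi (0 : ℝ), fejer (R * (u - t))) atTop
      (𝓝 (∫ y, fejer (R * y))) := by
    have e : ∀ u : ℝ, ∫ t in Ioi (0 : ℝ), fejer (R * (u - t))
        = ∫ y, (Iio u).indicator (fun y => fejer (R * y)) y := by
      intro u
      rw [← integral_indicator measurableSet_Ioi,
        ← integral_sub_left_eq_self (fun y => (Iio u).indicator (fun y => fejer (R * y)) y)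
          volume u]
      refine integral_congr_ae (ae_of_all _ fun t => ?_)
      simp only [indicator, mem_Ioi, mem_Iio, sub_lt_self_iff]
    simp_rw [e]
    refine tendsto_integral_filter_of_dominated_convergence (fun y => fejer (R * y))
      (Eventually.of_forall fun u => (h_int.indicator measurableSet_Iio).aestronglyMeasurable)
      (Eventually.of_forall fun u => ae_of_all _ fun y => ?_) h_int (ae_of_all _ fun y => ?_)
    · refine (norm_indicator_le_norm_self _ _).trans_eq ?_
      rw [Real.norm_of_nonneg (fejer_nonneg _)]
    · refine tendsto_const_nhds.congr' ?_
      filter_upwards [eventually_gt_atTop y] with u hu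
      rw [indicator_of_mem (mem_Iio.2 hu)]
  have h4 := h1'.add h3
  rw [zero_add] at h4
  refine h4.congr fun u => ?_
  have i1 : Integrable (fun t : ℝ => psiN t * fejer (R * (u - t))) := by
    have := (integrable_psiN_fejer hR u).comp_sub_left u
    simpa using this
  have i2 := integrable_fejer_comp hR u
  have i3 : Integrable (fun t : ℝ => (psiN t - 1) * fejer (R * (u - t))) := by
    refine (i1.sub i2).congr (ae_of_all _ fun t => ?_)
    simp only [Pi.sub_apply]; ring
  rw [← integral_add i3.integrableOn i2.integrableOn,
    ← integral_sub_left_eq_self (fun y => psiN (u - y) * fejer (R * y)) volume u,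
    ← integral_indicator measurableSet_Ioi]
  refine integral_congr_ae (ae_of_all _ fun t => ?_)
  simp only [indicator, mem_Ioi]
  split_ifs with h
  · rw [sub_sub_cancel]; ring
  · rw [sub_sub_cancel, psiN_of_nonpos (not_lt.1 h), zero_mul]

/-- The mass of the rescaled Fejér kernel concentrates on `[-δ, δ]` as the scale `R` grows. -/
lemma tendsto_fejer_concentrate {δ : ℝ} (hδ : 0 < δ) :
    Tendsto (fun R : ℝ => (∫ y in Icc (-δ) δ, fejer (R * y)) / ∫ y, fejer (R * y)) atTop
      (𝓝 1) := by
  have hI := integral_fejer_pos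
  have h1 : Tendsto (fun R : ℝ => ∫ x in Icc (-(R * δ)) (R * δ), fejer x) atTop
      (𝓝 (∫ x, fejer x)) := by
    have hc : AECover volume atTop (fun R : ℝ => Icc (-(R * δ)) (R * δ)) :=
      aecover_Icc (tendsto_neg_atTop_atBot.comp (tendsto_id.atTop_mul_const hδ))
        (tendsto_id.atTop_mul_const hδ)
    exact hc.integral_tendsto_of_countably_generated integrable_fejer
  have h2 := h1.div_const (∫ x, fejer x)
  rw [div_self hI.ne'] at h2
  refine h2.congr' ?_
  filter_upwards [eventually_gt_atTop 0] with R hR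
  have e1 : ∫ y, fejer (R * y) = R⁻¹ * ∫ x, fejer x := by
    rw [Measure.integral_comp_mul_left fejer R, abs_of_pos (inv_pos.2 hR), smul_eq_mul]
  have e2 : ∫ y in Icc (-δ) δ, fejer (R * y)
      = R⁻¹ * ∫ x in Icc (-(R * δ)) (R * δ), fejer x := by
    rw [← integral_indicator measurableSet_Icc, ← integral_indicator measurableSet_Icc,
      ← smul_eq_mul, ← abs_of_pos (inv_pos.2 hR),
      ← Measure.integral_comp_mul_left _ R]
    refine integral_congr_ae (ae_of_all _ fun y => ?_)
    simp only [indicator, mem_Icc]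
    have : (-(R * δ) ≤ R * y ∧ R * y ≤ R * δ) ↔ (-δ ≤ y ∧ y ≤ δ) := by
      rw [← mul_neg, mul_le_mul_iff_right₀ hR, mul_le_mul_iff_right₀ hR]
    simp only [this]
  rw [e1, e2, mul_div_mul_left _ _ (inv_pos.2 hR).ne']

/-- The prime number theorem in the form `ψ(x) ~ x`. By slow decrease, `psiN u` is at most about the
average of `psiN` over `[u, u + 2δ]` and at least about its average over `[u - 2δ, u]`; hence the
averages are centred at `u + δ` and at `u - δ`. -/
theorem tendsto_psiN : Tendsto psiN atTop (𝓝 1) := by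
  set C : ℝ := Real.log 4 + 4 with hCdef
  have hC0 : 0 ≤ C := (psiN_nonneg 0).trans (psiN_le 0)
  rw [Metric.tendsto_nhds]
  intro ε hε
  obtain ⟨δ, ⟨hδup, hδlo⟩, hδ0, hδ1⟩ : ∃ δ : ℝ,
      (Real.exp (2 * δ) * (1 + δ) / (1 - δ) < 1 + ε ∧
        1 - ε < Real.exp (-(2 * δ)) * ((1 - δ) - C * δ)) ∧ 0 < δ ∧ δ < 1 := by
    have c1 : ContinuousAt (fun δ : ℝ => Real.exp (2 * δ) * (1 + δ) / (1 - δ)) 0 := by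
      refine ContinuousAt.div (by fun_prop) (by fun_prop) (by norm_num)
    have c2 : ContinuousAt (fun δ : ℝ => Real.exp (-(2 * δ)) * ((1 - δ) - C * δ)) 0 := by
      fun_prop
    have e1 := c1.eventually_lt (g := fun _ => 1 + ε) continuousAt_const (by simpa using hε)
    have e2 := continuousAt_const.eventually_lt (f := fun _ => 1 - ε) c2 (by simpa using hε)
    have e3 : ∀ᶠ δ : ℝ in 𝓝[>] 0, δ ∈ Ioo (0 : ℝ) 1 := Ioo_mem_nhdsGT zero_lt_one
    obtain ⟨δ, h⟩ := (((e1.and e2).filter_mono nhdsWithin_le_nhds).and e3).exists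
    exact ⟨δ, h⟩
  obtain ⟨R, hRq, hR⟩ := (((tendsto_fejer_concentrate hδ0).eventually_const_lt
    (by linarith : 1 - δ < 1)).and (eventually_gt_atTop 0)).exists
  have h_int : Integrable fun t : ℝ => fejer (R * t) :=
    (integrable_comp_mul_left_iff fejer hR.ne').2 integrable_fejer
  set J := ∫ y, fejer (R * y) with hJ
  set m := ∫ y in Icc (-δ) δ, fejer (R * y) with hm
  have hJpos : 0 < J := by
    rw [hJ, Measure.integral_comp_mul_left fejer R, abs_of_pos (inv_pos.2 hR), smul_eq_mul]
    exact mul_pos (inv_pos.2 hR) integral_fejer_pos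
  have hmlo : (1 - δ) * J < m := (lt_div_iff₀ hJpos).1 hRq
  have hmc : m + ∫ y in (Icc (-δ) δ)ᶜ, fejer (R * y) = J :=
    integral_add_compl measurableSet_Icc h_int
  have hmc0 : 0 ≤ ∫ y in (Icc (-δ) δ)ᶜ, fejer (R * y) :=
    integral_nonneg fun y => fejer_nonneg _
  have hS := tendsto_psiN_fejer hR
  rw [← hJ] at hS
  have hup : ∀ᶠ u in atTop, (∫ y, psiN (u + δ - y) * fejer (R * y)) < (1 + δ) * J :=
    (hS.comp (tendsto_atTop_add_const_right atTop δ tendsto_id)).eventually_lt_const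
      (by nlinarith)
  have hlo : ∀ᶠ u in atTop, (1 - δ) * J < (∫ y, psiN (u - δ - y) * fejer (R * y)) :=
    (hS.comp (tendsto_atTop_add_const_right atTop (-δ) tendsto_id)).eventually_const_lt
      (by nlinarith)
  filter_upwards [hup, hlo] with u hu1 hu2
  have hp0 := psiN_nonneg u
  rw [Real.dist_eq, abs_lt]
  constructor
  · have i := integrable_psiN_fejer hR (u - δ)
    have split := integral_add_compl (s := Icc (-δ) δ) measurableSet_Icc i
    have b1 : ∫ y in Icc (-δ) δ, psiN (u - δ - y) * fejer (R * y)
        ≤ Real.exp (2 * δ) * psiN u * m := by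
      rw [hm, ← integral_const_mul]
      refine setIntegral_mono_on i.integrableOn (h_int.const_mul _).integrableOn
        measurableSet_Icc fun y hy => ?_
      refine mul_le_mul_of_nonneg_right ?_ (fejer_nonneg _)
      refine (psiN_slow (t := u) (by linarith [hy.1])).trans ?_
      exact mul_le_mul_of_nonneg_right (Real.exp_le_exp.2 (by linarith [hy.2])) hp0
    have b2 : ∫ y in (Icc (-δ) δ)ᶜ, psiN (u - δ - y) * fejer (R * y)
        ≤ C * ∫ y in (Icc (-δ) δ)ᶜ, fejer (R * y) := by
      rw [← integral_const_mul]
      refine setIntegral_mono_on i.integrableOn (h_int.const_mul _).integrableOn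
        measurableSet_Icc.compl fun y hy => ?_
      exact mul_le_mul_of_nonneg_right (psiN_le _) (fejer_nonneg _)
    have b3 : C * ∫ y in (Icc (-δ) δ)ᶜ, fejer (R * y) ≤ C * (δ * J) :=
      mul_le_mul_of_nonneg_left (by linarith) hC0
    have b4 : Real.exp (2 * δ) * psiN u * m ≤ Real.exp (2 * δ) * psiN u * J :=
      mul_le_mul_of_nonneg_left (by linarith) (mul_nonneg (Real.exp_pos _).le hp0)
    have b5 : ((1 - δ) - C * δ) * J ≤ (Real.exp (2 * δ) * psiN u) * J := by linarith
    have b6 := le_of_mul_le_mul_right b5 hJpos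
    have b7 := mul_le_mul_of_nonneg_left b6 (Real.exp_pos (-(2 * δ))).le
    rw [← mul_assoc, ← Real.exp_add, neg_add_cancel, Real.exp_zero, one_mul] at b7
    linarith
  · have i := integrable_psiN_fejer hR (u + δ)
    have b0 : ∫ y in Icc (-δ) δ, psiN (u + δ - y) * fejer (R * y)
        ≤ ∫ y, psiN (u + δ - y) * fejer (R * y) :=
      setIntegral_le_integral i (ae_of_all _ fun y =>
        mul_nonneg (psiN_nonneg _) (fejer_nonneg _))
    have b1 : Real.exp (-(2 * δ)) * psiN u * m
        ≤ ∫ y in Icc (-δ) δ, psiN (u + δ - y) * fejer (R * y) := by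
      rw [hm, ← integral_const_mul]
      refine setIntegral_mono_on (h_int.const_mul _).integrableOn i.integrableOn
        measurableSet_Icc fun y hy => ?_
      refine mul_le_mul_of_nonneg_right ?_ (fejer_nonneg _)
      have h1 := psiN_slow (s := u) (t := u + δ - y) (by linarith [hy.2])
      have h2 : Real.exp (u + δ - y - u) ≤ Real.exp (2 * δ) :=
        Real.exp_le_exp.2 (by linarith [hy.1])
      have h3 := h1.trans (mul_le_mul_of_nonneg_right h2 (psiN_nonneg _))
      have h4 := mul_le_mul_of_nonneg_left h3 (Real.exp_pos (-(2 * δ))).le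
      rwa [← mul_assoc (Real.exp (-(2 * δ))) (Real.exp (2 * δ)), ← Real.exp_add, neg_add_cancel,
        Real.exp_zero, one_mul] at h4
    have b2 : Real.exp (-(2 * δ)) * psiN u * ((1 - δ) * J) ≤ Real.exp (-(2 * δ)) * psiN u * m :=
      mul_le_mul_of_nonneg_left hmlo.le (mul_nonneg (Real.exp_pos _).le hp0)
    have b3 : (Real.exp (-(2 * δ)) * psiN u * (1 - δ)) * J ≤ (1 + δ) * J := by linarith
    have b4 := le_of_mul_le_mul_right b3 hJpos
    have b5 : psiN u ≤ Real.exp (2 * δ) * (1 + δ) / (1 - δ) := by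
      rw [le_div_iff₀ (by linarith)]
      have := mul_le_mul_of_nonneg_left b4 (Real.exp_pos (2 * δ)).le
      rwa [← mul_assoc, ← mul_assoc, ← Real.exp_add, add_neg_cancel, Real.exp_zero,
        one_mul] at this
    linarith

/-- The **prime number theorem**, `π(x) log x / x → 1`, deduced from `ψ(x) ~ x` through `θ`. -/
theorem tendsto_primeCounting :
    Tendsto (fun x : ℝ => (Nat.primeCounting ⌊x⌋₊ : ℝ) * Real.log x / x) atTop (𝓝 1) := by
  have h1 : Tendsto (fun x : ℝ => Chebyshev.psi x / x) atTop (𝓝 1) := by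
    refine (tendsto_psiN.comp Real.tendsto_log_atTop).congr' ?_
    filter_upwards [eventually_gt_atTop 0] with x hx
    simp only [Function.comp, psiN]
    rw [Real.exp_neg, Real.exp_log hx, div_eq_mul_inv]
  have h2 : Tendsto (fun x : ℝ => (Chebyshev.psi - Chebyshev.theta) x / x) atTop (𝓝 0) := by
    refine (Chebyshev.isBigO_psi_sub_theta_sqrt.trans_isLittleO ?_).tendsto_div_nhds_zero
    refine Asymptotics.isLittleO_of_tendsto' ?_ ?_
    · filter_upwards [eventually_gt_atTop 0] with x hx h
      exact absurd h hx.ne'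
    · refine (Real.tendsto_sqrt_atTop.inv_tendsto_atTop).congr' ?_
      filter_upwards with x
      rw [Real.sqrt_div_self, Pi.inv_apply]
  have h3 : Tendsto (fun x : ℝ => ((Nat.primeCounting ⌊x⌋₊ : ℝ) - Chebyshev.theta x / Real.log x)
      * Real.log x / x) atTop (𝓝 0) := by
    have hb : (fun x : ℝ => (Nat.primeCounting ⌊x⌋₊ : ℝ) - Chebyshev.theta x / Real.log x)
        =o[atTop] fun x => x / Real.log x := by
      refine Chebyshev.primeCounting_sub_theta_div_log_isBigO.trans_isLittleO ?_
      refine Asymptotics.isLittleO_of_tendsto' ?_ ?_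
      · filter_upwards [eventually_gt_atTop 1] with x hx h
        exact absurd h (div_pos (by linarith) (Real.log_pos hx)).ne'
      · refine (Real.tendsto_log_atTop.inv_tendsto_atTop).congr' ?_
        filter_upwards [eventually_gt_atTop 1] with x hx
        have := (Real.log_pos hx).ne'
        simp only [Pi.inv_apply]
        field_simp
    · refine hb.tendsto_div_nhds_zero.congr fun x => ?_
      rw [div_div_eq_mul_div]
  have h4 := (h3.sub h2).add h1
  simp only [sub_zero, zero_add] at h4
  refine h4.congr' ?_
  filter_upwards [eventually_gt_atTop 1] with x hx
  have := (Real.log_pos hx).ne'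
  have hx' : x ≠ 0 := by linarith
  simp only [Pi.sub_apply]
  field_simp
  ring

/-! ### Asymptotics of the logarithm of the Euler product -/

/-- The kernel `1 / (e ^ x - 1)`, the derivative of `log (1 - e ^ (-x))`. -/
noncomputable def planck (x : ℝ) : ℝ := (Real.exp x - 1)⁻¹

lemma planck_nonneg {x : ℝ} (hx : 0 ≤ x) : 0 ≤ planck x :=
  inv_nonneg.2 (by linarith [Real.one_le_exp hx])

lemma planck_pos {x : ℝ} (hx : 0 < x) : 0 < planck x :=
  inv_pos.2 (by linarith [Real.one_lt_exp_iff.2 hx])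

lemma measurable_planck : Measurable planck := by unfold planck; fun_prop

lemma planck_le {x : ℝ} (hx : 0 < x) : planck x ≤ x⁻¹ * Real.exp (-(1 / 2) * x) := by
  have h1 : x * Real.exp (x / 2) ≤ Real.exp x - 1 := by
    have h := Real.self_le_sinh_iff.2 (half_pos hx).le
    rw [Real.sinh_eq] at h
    have e : Real.exp x = Real.exp (x / 2) * Real.exp (x / 2) := by
      rw [← Real.exp_add]; ring_nf
    have e2 : Real.exp (x / 2) * Real.exp (-(x / 2)) = 1 := by rw [← Real.exp_add]; simp
    have := mul_le_mul_of_nonneg_left h (Real.exp_pos (x / 2)).le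
    nlinarith
  have h2 : 0 < x * Real.exp (x / 2) := mul_pos hx (Real.exp_pos _)
  calc planck x ≤ (x * Real.exp (x / 2))⁻¹ := inv_anti₀ h2 h1
    _ = _ := by rw [mul_inv, ← Real.exp_neg]; ring_nf

lemma planck_hasDerivAt {x : ℝ} (hx : 0 < x) :
    HasDerivAt (fun x : ℝ => Real.log (1 - Real.exp (-x))) (planck x) x := by
  have h0 : Real.exp (-x) < 1 := Real.exp_lt_one_iff.2 (by linarith)
  have h1 : HasDerivAt (fun x : ℝ => 1 - Real.exp (-x)) (Real.exp (-x)) x := by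
    have := ((hasDerivAt_neg x).exp).const_sub 1
    simpa using this
  refine (h1.log (by linarith)).congr_deriv ?_
  rw [planck, Real.exp_neg]
  have := Real.exp_pos x
  have h3 : Real.exp x - 1 ≠ 0 := by linarith [Real.one_lt_exp_iff.2 hx]
  have h4 : 1 - (Real.exp x)⁻¹ ≠ 0 := by rw [← Real.exp_neg]; linarith
  field_simp

lemma planck_tendsto :
    Tendsto (fun x : ℝ => Real.log (1 - Real.exp (-x))) atTop (𝓝 0) := by
  have h : Tendsto (fun x : ℝ => 1 - Real.exp (-x)) atTop (𝓝 1) := by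
    have := (Real.tendsto_exp_neg_atTop_nhds_zero).const_sub 1
    simpa using this
  have := h.log one_ne_zero
  simpa using this

lemma integrableOn_planck {c : ℝ} (hc : 0 < c) : IntegrableOn planck (Ioi c) :=
  integrableOn_Ioi_deriv_of_nonneg' (fun _ hx => planck_hasDerivAt (hc.trans_le hx))
    (fun _ hx => planck_nonneg (hc.trans hx).le) planck_tendsto

lemma integral_planck {c : ℝ} (hc : 0 < c) :
    ∫ x in Ioi c, planck x = -Real.log (1 - Real.exp (-c)) := by
  rw [integral_Ioi_of_hasDerivAt_of_nonneg' (fun _ hx => planck_hasDerivAt (hc.trans_le hx))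
    (fun _ hx => planck_nonneg (hc.trans hx).le) planck_tendsto, zero_sub]

/-- The logarithm of the Euler product `∏_p (1 - exp (-s p ^ k))⁻¹`, which for `s > 0` is the
generating function of `pPk k` at `exp (-s)`. -/
noncomputable def logEuler (k : ℕ) (s : ℝ) : ℝ :=
  ∑' n : ℕ, if n.Prime then -Real.log (1 - Real.exp (-(s * (n : ℝ) ^ k))) else 0

lemma summable_exp_primes {k : ℕ} (hk : 1 ≤ k) {s : ℝ} (hs : 0 < s) :
    Summable fun n : ℕ => if n.Prime then Real.exp (-(s * (n : ℝ) ^ k)) else 0 := by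
  have h : Summable fun n : ℕ => Real.exp (-s) ^ n :=
    summable_geometric_of_lt_one (Real.exp_pos _).le (Real.exp_lt_one_iff.2 (by linarith))
  refine Summable.of_nonneg_of_le (fun n => ?_) (fun n => ?_) h
  · split_ifs; exacts [(Real.exp_pos _).le, le_rfl]
  · split_ifs with hn
    · rw [← Real.exp_nat_mul]
      refine Real.exp_le_exp.2 ?_
      have h1 : (1 : ℝ) ≤ n := by exact_mod_cast hn.one_lt.le
      have h2 : (n : ℝ) ≤ (n : ℝ) ^ k := le_self_pow₀ h1 (by omega)
      nlinarith
    · positivity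

lemma summable_logEuler {k : ℕ} (hk : 1 ≤ k) {s : ℝ} (hs : 0 < s) :
    Summable fun n : ℕ => if n.Prime then -Real.log (1 - Real.exp (-(s * (n : ℝ) ^ k))) else 0 := by
  have h := (Real.summable_log_one_add_of_summable (summable_exp_primes hk hs).neg).neg
  refine h.congr fun n => ?_
  split_ifs
  · rw [sub_eq_add_neg]
  · simp

/-- Each term of `logEuler k s` is the integral of `planck` over `x > s p ^ k`; summing first over the
primes with `s p ^ k ≤ x` gives the prime counting function at `(x / s) ^ (1 / k)`. -/
lemma logEuler_eq_integral {k : ℕ} (hk : 1 ≤ k) {s : ℝ} (hs : 0 < s) :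
    logEuler k s = ∫ x in Ioi (0 : ℝ),
      (Nat.primeCounting ⌊(x / s) ^ ((k : ℝ)⁻¹)⌋₊ : ℝ) * planck x := by
  have hk0 : (0 : ℝ) < k := by exact_mod_cast hk
  let g : ℕ → ℝ → ℝ := fun n x =>
    if n.Prime then (Ici (s * (n : ℝ) ^ k)).indicator planck x else 0
  have hc : ∀ n : ℕ, n.Prime → 0 < s * (n : ℝ) ^ k := fun n hn =>
    mul_pos hs (pow_pos (by exact_mod_cast hn.pos) k)
  have hgint : ∀ n, Integrable (g n) (volume.restrict (Ioi 0)) := by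
    intro n
    by_cases hn : n.Prime
    · simp only [g, hn, if_true]
      refine Integrable.restrict ?_
      rw [integrable_indicator_iff measurableSet_Ici]
      exact (integrableOn_Ici_iff_integrableOn_Ioi (by simp)).2 (integrableOn_planck (hc n hn))
    · simp [g, hn]
  have hgnn : ∀ n, ∀ x ∈ Ioi (0 : ℝ), 0 ≤ g n x := by
    intro n x hx
    simp only [g]
    split_ifs
    · exact indicator_apply_nonneg fun _ => planck_nonneg (le_of_lt hx)
    · exact le_rfl
  have hgval : ∀ n, ∫ x in Ioi (0 : ℝ), g n x =
      if n.Prime then -Real.log (1 - Real.exp (-(s * (n : ℝ) ^ k))) else 0 := by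
    intro n
    by_cases hn : n.Prime
    · simp only [g, hn, if_true]
      rw [setIntegral_indicator measurableSet_Ici, inter_eq_self_of_subset_right,
        integral_Ici_eq_integral_Ioi, integral_planck (hc n hn)]
      intro x hx
      exact (hc n hn).trans_le hx
    · simp [g, hn]
  have hnorm : ∀ n, ∫ x in Ioi (0 : ℝ), ‖g n x‖ = ∫ x in Ioi (0 : ℝ), g n x := fun n =>
    setIntegral_congr_fun measurableSet_Ioi fun x hx => Real.norm_of_nonneg (hgnn n x hx)
  have hsum := hasSum_integral_of_summable_integral_norm hgint
    (by simp_rw [hnorm, hgval]; exact summable_logEuler hk hs)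
  simp_rw [hgval] at hsum
  rw [logEuler, hsum.tsum_eq]
  refine setIntegral_congr_fun measurableSet_Ioi fun x hx => ?_
  have hx' : 0 < x := hx
  set M := ⌊(x / s) ^ ((k : ℝ)⁻¹)⌋₊ with hM
  have key : ∀ n : ℕ, s * (n : ℝ) ^ k ≤ x ↔ n ≤ M := by
    intro n
    rw [hM, Nat.le_floor_iff (by positivity), Real.le_rpow_inv_iff_of_pos (by positivity)
      (by positivity) hk0, Real.rpow_natCast, le_div_iff₀ hs, mul_comm]
  rw [tsum_eq_sum (s := Finset.range (M + 1))]
  · rw [Nat.primeCounting, Nat.primeCounting', Nat.count_eq_card_filter_range, ← nsmul_eq_mul,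
      ← Finset.sum_const, Finset.sum_filter]
    refine Finset.sum_congr rfl fun n hn => ?_
    simp only [g]
    split_ifs
    · rw [indicator_of_mem]
      exact (key n).2 (by simpa [Nat.lt_succ_iff] using hn)
    · rfl
  · intro n hn
    simp only [g]
    split_ifs
    · rw [indicator_of_notMem]
      intro h
      exact hn (by simpa [Nat.lt_succ_iff] using (key n).1 h)
    · rfl

lemma primeCounting_floor_le {y : ℝ} (hy : 0 ≤ y) : (Nat.primeCounting ⌊y⌋₊ : ℝ) ≤ y := by
  have : Nat.primeCounting ⌊y⌋₊ ≤ ⌊y⌋₊ := by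
    rw [Nat.primeCounting, Nat.primeCounting', Nat.count_eq_card_filter_range]
    calc _ ≤ (Finset.Ioc 0 ⌊y⌋₊).card := by
          refine Finset.card_le_card fun p hp => ?_
          simp only [Finset.mem_filter, Finset.mem_range, Finset.mem_Ioc] at hp ⊢
          exact ⟨hp.2.pos, by omega⟩
      _ = _ := by simp
  calc (Nat.primeCounting ⌊y⌋₊ : ℝ) ≤ (⌊y⌋₊ : ℝ) := by exact_mod_cast this
    _ ≤ y := Nat.floor_le hy

/-- A Chebyshev bound valid for all `y > 0`, needed to dominate the integrand in `tendsto_logEuler`. -/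
lemma exists_primeCounting_bound :
    ∃ D : ℝ, 1 ≤ D ∧ ∀ y : ℝ, 0 < y →
      (Nat.primeCounting ⌊y⌋₊ : ℝ) * Real.log y ≤ D * y := by
  obtain ⟨Y, hY⟩ := eventually_atTop.1
    (tendsto_primeCounting.eventually_lt_const (by norm_num : (1 : ℝ) < 2))
  refine ⟨max 2 (Real.log Y), le_max_of_le_left (by norm_num), fun y hy => ?_⟩
  have hpi := primeCounting_floor_le hy.le
  rcases le_or_gt Y y with h | h
  · have := (hY y h).le
    rw [div_le_iff₀ hy] at this
    exact this.trans (mul_le_mul_of_nonneg_right (le_max_left _ _) hy.le)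
  · rcases le_or_gt y 1 with h1 | h1
    · have h2 : Real.log y ≤ 0 := Real.log_nonpos hy.le h1
      have : (Nat.primeCounting ⌊y⌋₊ : ℝ) * Real.log y ≤ 0 :=
        mul_nonpos_of_nonneg_of_nonpos (Nat.cast_nonneg _) h2
      exact this.trans (by positivity)
    · have h2 : Real.log y ≤ Real.log Y := Real.log_le_log hy h.le
      have h3 : 0 ≤ Real.log y := Real.log_nonneg h1.le
      calc _ ≤ y * max 2 (Real.log Y) :=
            mul_le_mul hpi (h2.trans (le_max_right _ _)) h3 hy.le
        _ = _ := mul_comm _ _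

lemma abs_log_le {b x : ℝ} (hb : 0 < b) (hx : 0 < x) : |Real.log x| ≤ (x ^ b + x ^ (-b)) / b := by
  have h1 := Real.log_le_rpow_div hx.le hb
  have h2 := Real.log_le_rpow_div (inv_pos.2 hx).le hb
  rw [Real.log_inv, Real.inv_rpow hx.le, ← Real.rpow_neg hx.le] at h2
  have h3 : 0 ≤ x ^ b / b := by positivity
  have h4 : 0 ≤ x ^ (-b) / b := by positivity
  rw [add_div, abs_le]
  constructor <;> linarith

lemma integrableOn_bound {a D : ℝ} (ha : 0 < a) (hD : 0 ≤ D) :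
    IntegrableOn (fun x : ℝ => x ^ a * (D + |Real.log x|) * planck x) (Ioi 0) := by
  have hb : 0 < a / 2 := by linarith
  have h : ∀ q : ℝ, 0 < q →
      IntegrableOn (fun x : ℝ => x ^ (q - 1) * Real.exp (-(1 / 2) * x)) (Ioi 0) := by
    intro q hq
    have := integrableOn_rpow_mul_exp_neg_mul_rpow (p := 1) (s := q - 1) (b := 1 / 2)
      (by linarith) one_pos (by norm_num)
    simpa only [Real.rpow_one] using this
  have hdom := ((h a ha).const_mul D).add
    (((h (a + a / 2) (by linarith)).add (h (a - a / 2) (by linarith))).div_const (a / 2))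
  refine Integrable.mono' hdom ?_ ?_
  · have : Measurable fun x : ℝ => x ^ a * (D + |Real.log x|) * planck x :=
      ((measurable_id.pow_const a).mul
        (measurable_const.add (Real.measurable_log.abs))).mul measurable_planck
    exact this.aestronglyMeasurable
  · refine (ae_restrict_iff' measurableSet_Ioi).2 (ae_of_all _ fun x hx => ?_)
    have hx' : 0 < x := hx
    have p0 := planck_nonneg hx'.le
    rw [Real.norm_of_nonneg (by positivity)]
    calc x ^ a * (D + |Real.log x|) * planck x
        ≤ x ^ a * (D + (x ^ (a / 2) + x ^ (-(a / 2))) / (a / 2)) *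
          (x⁻¹ * Real.exp (-(1 / 2) * x)) := by
          gcongr
          · exact abs_log_le hb hx'
          · exact planck_le hx'
      _ = _ := by
          simp only [Pi.add_apply]
          rw [Real.rpow_sub hx' a 1, Real.rpow_sub hx' _ 1, Real.rpow_sub hx' _ 1,
            Real.rpow_add hx', Real.rpow_sub hx', Real.rpow_neg hx'.le, Real.rpow_one]
          field_simp

/-- The constant `k ∫ x ^ (1 / k) / (e ^ x - 1) dx` over `x > 0`, equal to `k Γ(1 + 1/k) ζ(1 + 1/k)`. -/
noncomputable def partConst (k : ℕ) : ℝ :=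
  ∫ x in Ioi (0 : ℝ), (k : ℝ) * x ^ ((k : ℝ)⁻¹) * planck x

lemma partConst_pos {k : ℕ} (hk : 1 ≤ k) : 0 < partConst k := by
  have hk0 : (0 : ℝ) < k := by exact_mod_cast hk
  have h_int : IntegrableOn (fun x : ℝ => (k : ℝ) * x ^ ((k : ℝ)⁻¹) * planck x) (Ioi 0) := by
    refine Integrable.mono' (integrableOn_bound (inv_pos.2 hk0) hk0.le) ?_ ?_
    · exact ((measurable_const.mul (measurable_id.pow_const _)).mul
        measurable_planck).aestronglyMeasurable
    · refine (ae_restrict_iff' measurableSet_Ioi).2 (ae_of_all _ fun x hx => ?_)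
      have hx' : 0 < x := hx
      have p0 := planck_nonneg hx'.le
      rw [Real.norm_of_nonneg (by positivity)]
      refine mul_le_mul_of_nonneg_right ?_ p0
      rw [mul_comm]
      refine mul_le_mul_of_nonneg_left ?_ (by positivity)
      linarith [abs_nonneg (Real.log x)]
  rw [partConst, setIntegral_pos_iff_support_of_nonneg_ae ?_ h_int]
  · have : Ioi (0 : ℝ) ⊆ Function.support (fun x : ℝ => (k : ℝ) * x ^ ((k : ℝ)⁻¹) * planck x) := by
      intro x hx
      have hx' : 0 < x := hx
      have := planck_pos hx'
      have h : 0 < (k : ℝ) * x ^ ((k : ℝ)⁻¹) * planck x := by positivity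
      exact h.ne'
    rw [inter_eq_self_of_subset_right this]
    simp
  · refine (ae_restrict_iff' measurableSet_Ioi).2 (ae_of_all _ fun x hx => ?_)
    have hx' : 0 < x := hx
    have p0 := planck_nonneg hx'.le
    simp only [Pi.zero_apply]
    positivity

/-- As `s → 0` from above, `logEuler k s ~ partConst k * s ^ (-1 / k) / log (1 / s)`: by the prime
number theorem the count in `logEuler_eq_integral` is about `k (x / s) ^ (1 / k) / log (1 / s)` for
fixed `x`, and dominated convergence applies. -/
theorem tendsto_logEuler {k : ℕ} (hk : 1 ≤ k) :
    Tendsto (fun s : ℝ => logEuler k s * (s ^ ((k : ℝ)⁻¹) * Real.log s⁻¹)) (𝓝[>] 0)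
      (𝓝 (partConst k)) := by
  have hk0 : (0 : ℝ) < k := by exact_mod_cast hk
  set a : ℝ := (k : ℝ)⁻¹ with ha
  have ha0 : 0 < a := inv_pos.2 hk0
  obtain ⟨D, hD1, hD⟩ := exists_primeCounting_bound
  have hmain : Tendsto (fun s : ℝ => ∫ x in Ioi (0 : ℝ),
      (Nat.primeCounting ⌊(x / s) ^ a⌋₊ : ℝ) * (s ^ a * Real.log s⁻¹) * planck x) (𝓝[>] 0)
      (𝓝 (partConst k)) := by
    refine tendsto_integral_filter_of_dominated_convergence
      (fun x : ℝ => x ^ a * (k * D + |Real.log x|) * planck x) ?_ ?_ ?_ ?_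
    · refine Eventually.of_forall fun s => ?_
      have m1 : Measurable fun x : ℝ => (Nat.primeCounting ⌊(x / s) ^ a⌋₊ : ℝ) :=
        (measurable_from_top (f := fun n : ℕ => (Nat.primeCounting n : ℝ))).comp
          (Nat.measurable_floor.comp ((measurable_id.div_const s).pow_const a))
      exact ((m1.mul_const _).mul measurable_planck).aestronglyMeasurable
    · filter_upwards [Ioo_mem_nhdsGT (zero_lt_one (α := ℝ))] with s hs
      refine (ae_restrict_iff' measurableSet_Ioi).2 (ae_of_all _ fun x hx => ?_)
      have hx' : 0 < x := hx
      have hs0 : 0 < s := hs.1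
      have p0 := planck_nonneg hx'.le
      have hls : 0 ≤ Real.log s⁻¹ := by
        rw [Real.log_inv]; linarith [Real.log_nonpos hs0.le hs.2.le]
      rw [Real.norm_of_nonneg (by positivity)]
      refine mul_le_mul_of_nonneg_right ?_ p0
      set y := (x / s) ^ a with hy
      have hy0 : 0 < y := by positivity
      have hlog : Real.log s⁻¹ = k * Real.log y - Real.log x := by
        rw [hy, Real.log_rpow (by positivity), Real.log_div hx'.ne' hs0.ne', Real.log_inv, ha]
        field_simp
        ring
      have hys : s ^ a * y = x ^ a := by
        rw [hy, Real.div_rpow hx'.le hs0.le]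
        have := (Real.rpow_pos_of_pos hs0 a).ne'
        field_simp
      have b1 := hD y hy0
      have b2 := primeCounting_floor_le hy0.le
      have b3 : (Nat.primeCounting ⌊y⌋₊ : ℝ) * -Real.log x ≤ y * |Real.log x| := by
        have h1 : (Nat.primeCounting ⌊y⌋₊ : ℝ) * -Real.log x
            ≤ (Nat.primeCounting ⌊y⌋₊ : ℝ) * |Real.log x| :=
          mul_le_mul_of_nonneg_left (neg_le_abs _) (Nat.cast_nonneg _)
        exact h1.trans (mul_le_mul_of_nonneg_right b2 (abs_nonneg _))
      have b4 : (Nat.primeCounting ⌊y⌋₊ : ℝ) * Real.log s⁻¹ ≤ y * (k * D + |Real.log x|) := by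
        rw [hlog]
        have := mul_le_mul_of_nonneg_left b1 hk0.le
        nlinarith
      calc (Nat.primeCounting ⌊y⌋₊ : ℝ) * (s ^ a * Real.log s⁻¹)
          = s ^ a * ((Nat.primeCounting ⌊y⌋₊ : ℝ) * Real.log s⁻¹) := by ring
        _ ≤ s ^ a * (y * (k * D + |Real.log x|)) :=
            mul_le_mul_of_nonneg_left b4 (by positivity)
        _ = x ^ a * (k * D + |Real.log x|) := by rw [← mul_assoc, hys]
    · exact integrableOn_bound ha0 (by positivity)
    · refine (ae_restrict_iff' measurableSet_Ioi).2 (ae_of_all _ fun x hx => ?_)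
      have hx' : 0 < x := hx
      refine Tendsto.mul_const _ ?_
      have t1 : Tendsto (fun s : ℝ => Real.log s⁻¹) (𝓝[>] 0) atTop :=
        Real.tendsto_log_atTop.comp tendsto_inv_nhdsGT_zero
      have t2 : Tendsto (fun s : ℝ => (x / s) ^ a) (𝓝[>] 0) atTop :=
        (tendsto_rpow_atTop ha0).comp
          ((tendsto_inv_nhdsGT_zero.const_mul_atTop hx').congr fun s => (div_eq_mul_inv x s).symm)
      have t3 := tendsto_primeCounting.comp t2
      have t4 : Tendsto (fun s : ℝ => (Real.log x / Real.log s⁻¹ + 1)⁻¹) (𝓝[>] 0) (𝓝 1) := by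
        have := ((t1.const_div_atTop (Real.log x)).add_const 1).inv₀ (by norm_num)
        simpa using this
      have t5 := (t3.mul t4).mul_const ((k : ℝ) * x ^ a)
      rw [one_mul, one_mul] at t5
      refine t5.congr' ?_
      filter_upwards [self_mem_nhdsWithin, t1.eventually_gt_atTop 0,
        t1.eventually_gt_atTop (-Real.log x)] with s hs hl1 hl2
      have hs0 : 0 < s := hs
      simp only [Function.comp]
      have hlog : Real.log ((x / s) ^ a) = a * (Real.log x + Real.log s⁻¹) := by
        rw [Real.log_rpow (by positivity), Real.log_div hx'.ne' hs0.ne', Real.log_inv]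
        ring
      rw [hlog, Real.div_rpow hx'.le hs0.le]
      have h1 := (Real.rpow_pos_of_pos hs0 a).ne'
      have h2 := (Real.rpow_pos_of_pos hx' a).ne'
      have h3 : Real.log x + Real.log s⁻¹ ≠ 0 := by linarith
      have h4 : Real.log x / Real.log s⁻¹ + 1 = (Real.log x + Real.log s⁻¹) / Real.log s⁻¹ := by
        rw [add_div, div_self hl1.ne']
      rw [h4, show (k : ℝ) = a⁻¹ by rw [ha, inv_inv]]
      generalize Real.log s⁻¹ = L at *
      generalize (Nat.primeCounting ⌊x ^ a / s ^ a⌋₊ : ℝ) = P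
      have h5 := ha0.ne'
      have h6 := hl1.ne'
      clear_value a
      field_simp
  refine hmain.congr' ?_
  filter_upwards [self_mem_nhdsWithin] with s hs
  rw [logEuler_eq_integral hk hs, ← integral_mul_const]
  refine setIntegral_congr_fun measurableSet_Ioi fun x _ => ?_
  ring

/-! ### The generating function and monotonicity along large steps -/

/-- The additive weight of `m`: the sum of `p ^ k` over the prime factors `p` of `m`, counted with
multiplicity. -/
def wt (k m : ℕ) : ℕ := (m.primeFactorsList.map (· ^ k)).sum

lemma wt_mul (k : ℕ) {m n : ℕ} (hm : m ≠ 0) (hn : n ≠ 0) : wt k (m * n) = wt k m + wt k n := by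
  rw [wt, ((Nat.perm_primeFactorsList_mul hm hn).map _).sum_eq, List.map_append, List.sum_append,
    wt, wt]

lemma wt_prime (k : ℕ) {p : ℕ} (hp : p.Prime) : wt k p = p ^ k := by
  simp [wt, Nat.primeFactorsList_prime hp]

/-- The completely multiplicative function `m ↦ exp (-s · wt k m)`, extended by `0` at `0`. -/
noncomputable def wtHom (k : ℕ) (s : ℝ) : ℕ →*₀ ℝ where
  toFun m := if m = 0 then 0 else Real.exp (-(s * wt k m))
  map_zero' := by simp
  map_one' := by simp [wt]
  map_mul' m n := by
    rcases eq_or_ne m 0 with rfl | hm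
    · simp
    rcases eq_or_ne n 0 with rfl | hn
    · simp
    simp only [mul_eq_zero, hm, hn, or_self, if_false, wt_mul k hm hn]
    rw [← Real.exp_add]
    push_cast
    ring_nf

lemma wtHom_apply (k : ℕ) (s : ℝ) {m : ℕ} (hm : m ≠ 0) :
    wtHom k s m = Real.exp (-(s * wt k m)) := if_neg hm

lemma wtHom_nonneg (k : ℕ) (s : ℝ) (m : ℕ) : 0 ≤ wtHom k s m := by
  rcases eq_or_ne m 0 with rfl | hm
  · simp
  · rw [wtHom_apply k s hm]; positivity

lemma wtHom_prime (k : ℕ) (s : ℝ) {p : ℕ} (hp : p.Prime) :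
    wtHom k s p = Real.exp (-(s * (p : ℝ) ^ k)) := by
  rw [wtHom_apply k s hp.ne_zero, wt_prime k hp]; push_cast; rfl

lemma wtHom_prime_lt (k : ℕ) {s : ℝ} (hs : 0 < s) {p : ℕ} (hp : p.Prime) : wtHom k s p < 1 := by
  rw [wtHom_prime k s hp, Real.exp_lt_one_iff]
  have : (0 : ℝ) < p := by exact_mod_cast hp.pos
  have : 0 < s * (p : ℝ) ^ k := by positivity
  linarith

lemma prod_primesBelow_eq (k : ℕ) {s : ℝ} (hs : 0 < s) (N : ℕ) :
    ∏ p ∈ N.primesBelow, (1 - wtHom k s p)⁻¹ = Real.exp (∑ n ∈ Finset.range N,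
      if n.Prime then -Real.log (1 - Real.exp (-(s * (n : ℝ) ^ k))) else 0) := by
  rw [← Finset.sum_filter, Real.exp_sum]
  refine Finset.prod_congr rfl fun p hp => ?_
  have hp' : p.Prime := (Finset.mem_filter.1 hp).2
  have := wtHom_prime_lt k hs hp'
  rw [← wtHom_prime k s hp', Real.exp_neg, Real.exp_log (by linarith)]

/-- The sum over `m < N` is at most the sum over all `N`-smooth numbers, a finite Euler product, which
is bounded by `exp (logEuler k s)`. -/
lemma summable_wtHom {k : ℕ} (hk : 1 ≤ k) {s : ℝ} (hs : 0 < s) : Summable (wtHom k s) := by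
  refine summable_of_sum_range_le (c := Real.exp (logEuler k s)) (wtHom_nonneg k s) fun N => ?_
  have h := (EulerProduct.summable_and_hasSum_smoothNumbers_prod_primesBelow_geometric
    (f := (wtHom k s).toMonoidHom) (fun {p} hp => by
      have : wtHom k s p < 1 := wtHom_prime_lt k hs hp
      change ‖wtHom k s p‖ < 1
      rwa [Real.norm_of_nonneg (wtHom_nonneg k s p)]) N).2
  have h' := (hasSum_subtype_iff_indicator (f := wtHom k s) (s := N.smoothNumbers)).1 h
  calc ∑ m ∈ Finset.range N, wtHom k s m
      ≤ ∑ m ∈ Finset.range N, (N.smoothNumbers).indicator (wtHom k s) m := by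
        refine Finset.sum_le_sum fun m hm => ?_
        rcases eq_or_ne m 0 with rfl | hm0
        · rw [map_zero]; exact indicator_nonneg (fun m _ => wtHom_nonneg k s m) _
        · rw [indicator_of_mem]
          exact Nat.mem_smoothNumbers_of_lt (Nat.pos_of_ne_zero hm0) (Finset.mem_range.1 hm)
    _ ≤ ∏ p ∈ N.primesBelow, (1 - wtHom k s p)⁻¹ :=
        sum_le_hasSum _ (fun m _ => indicator_nonneg (fun m _ => wtHom_nonneg k s m) _) h'
    _ ≤ Real.exp (logEuler k s) := by
        rw [prod_primesBelow_eq k hs]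
        refine Real.exp_le_exp.2 ((summable_logEuler hk hs).sum_le_tsum _ fun n _ => ?_)
        split_ifs with hn
        · have := wtHom_prime_lt k hs hn
          have h0 := wtHom_nonneg k s n
          rw [wtHom_prime k s hn] at this h0
          linarith [Real.log_nonpos (by linarith : (0 : ℝ) ≤ 1 - Real.exp (-(s * (n : ℝ) ^ k)))
            (by linarith)]
        · exact le_rfl

lemma hasSum_wtHom {k : ℕ} (hk : 1 ≤ k) {s : ℝ} (hs : 0 < s) :
    HasSum (wtHom k s) (Real.exp (logEuler k s)) := by
  have h1 := EulerProduct.eulerProduct_completely_multiplicative (f := wtHom k s)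
    ((summable_wtHom hk hs).norm)
  simp_rw [prod_primesBelow_eq k hs] at h1
  have h2 := (Real.continuous_exp.tendsto _).comp
    (summable_logEuler hk hs).hasSum.tendsto_sum_nat
  have := tendsto_nhds_unique h1 h2
  rw [logEuler, ← this]
  exact (summable_wtHom hk hs).hasSum

/-- The partition of `wt k m` into the `k`-th powers of the prime factors of `m`. -/
def toPart (k n : ℕ) (x : {m : {m : ℕ // m ≠ 0} // wt k m = n}) :
    {P : n.Partition // ∀ i ∈ P.parts, ∃ p : ℕ, p.Prime ∧ i = p ^ k} :=
  ⟨{ parts := ((x.1.1.primeFactorsList.map (· ^ k) : List ℕ) : Multiset ℕ)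
     parts_pos := by
       intro i hi
       simp only [Multiset.mem_coe, List.mem_map] at hi
       obtain ⟨p, hp, rfl⟩ := hi
       exact pow_pos (Nat.prime_of_mem_primeFactorsList hp).pos k
     parts_sum := by
       rw [Multiset.sum_coe]; exact x.2 }, by
    intro i hi
    simp only [Multiset.mem_coe, List.mem_map] at hi
    obtain ⟨p, hp, rfl⟩ := hi
    exact ⟨p, Nat.prime_of_mem_primeFactorsList hp, rfl⟩⟩

/-- Unique factorisation: the partitions counted by `pPk k n` correspond to the `m ≠ 0` with
`wt k m = n`. -/
lemma toPart_bijective {k : ℕ} (hk : 1 ≤ k) (n : ℕ) : Function.Bijective (toPart k n) := by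
  constructor
  · rintro ⟨⟨m, hm⟩, h⟩ ⟨⟨m', hm'⟩, h'⟩ heq
    have h1 : ((m.primeFactorsList.map (· ^ k) : List ℕ) : Multiset ℕ) =
        ((m'.primeFactorsList.map (· ^ k) : List ℕ) : Multiset ℕ) :=
      congrArg (fun P => P.1.parts) heq
    rw [← Multiset.map_coe, ← Multiset.map_coe] at h1
    have h2 := Multiset.map_injective (Nat.pow_left_injective (by omega : k ≠ 0)) h1
    have h3 : m = m' := by
      rw [← Nat.prod_primeFactorsList hm, ← Nat.prod_primeFactorsList hm',
        ← Multiset.prod_coe, h2, Multiset.prod_coe]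
    subst h3
    rfl
  · rintro ⟨P, hP⟩
    have hP' := hP
    choose! g hg1 hg2 using hP'
    let l : List ℕ := (P.parts.map g).toList
    have hl : ∀ p ∈ l, p.Prime := by
      intro p hp
      simp only [l, Multiset.mem_toList, Multiset.mem_map] at hp
      obtain ⟨i, hi, rfl⟩ := hp
      exact hg1 i hi
    have hne : l.prod ≠ 0 := List.prod_ne_zero fun h => Nat.not_prime_zero (hl 0 h)
    have hperm := Nat.primeFactorsList_unique rfl hl
    have hparts : ((l.prod.primeFactorsList.map (· ^ k) : List ℕ) : Multiset ℕ) = P.parts := by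
      rw [← Multiset.map_coe, ← Multiset.coe_eq_coe.2 hperm, Multiset.coe_toList,
        Multiset.map_map]
      conv_rhs => rw [← Multiset.map_id P.parts]
      exact Multiset.map_congr rfl fun i hi => (hg2 i hi).symm
    refine ⟨⟨⟨l.prod, hne⟩, ?_⟩, Subtype.ext (Nat.Partition.ext hparts)⟩
    rw [wt, ← Multiset.sum_coe, hparts, P.parts_sum]

/-- The generating function of `pPk k` at `exp (-s)` is the Euler product: the sum of `wtHom k s m` over
all `m`, grouped by the value of `wt k m`. -/
theorem hasSum_pPk {k : ℕ} (hk : 1 ≤ k) {s : ℝ} (hs : 0 < s) :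
    HasSum (fun n : ℕ => (pPk k n : ℝ) * Real.exp (-(s * n))) (Real.exp (logEuler k s)) := by
  have h1 : HasSum (fun m : {m : ℕ // m ≠ 0} => Real.exp (-(s * wt k m)))
      (Real.exp (logEuler k s)) := by
    have h := (hasSum_subtype_iff_of_support_subset (f := wtHom k s) (s := {m : ℕ | m ≠ 0})
      (fun m hm => by rintro rfl; simp at hm)).2 (hasSum_wtHom hk hs)
    exact h.congr_fun fun m => (wtHom_apply k s m.2).symm
  have h2 := (Equiv.sigmaFiberEquiv (fun m : {m : ℕ // m ≠ 0} => wt k m)).hasSum_iff.2 h1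
  refine h2.sigma fun n => ?_
  have e := Equiv.ofBijective _ (toPart_bijective hk n)
  have : Fintype {m : {m : ℕ // m ≠ 0} // wt k m = n} :=
    @Fintype.ofFinite _ (Finite.of_equiv _ e.symm)
  have h3 := hasSum_fintype fun _ : {m : {m : ℕ // m ≠ 0} // wt k m = n} => Real.exp (-(s * n))
  rw [Finset.sum_const, nsmul_eq_mul, Finset.card_univ, ← Nat.card_eq_fintype_card,
    Nat.card_congr e] at h3
  refine h3.congr_fun fun m => ?_
  simp [Equiv.sigmaFiberEquiv, m.2]

/-- Adding a fixed multiset `Q` of admissible parts is an injection on admissible partitions. -/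
lemma pPk_add_le {k n m : ℕ} (Q : Multiset ℕ) (hQ : ∀ i ∈ Q, ∃ p : ℕ, p.Prime ∧ i = p ^ k)
    (hm : n + Q.sum = m) : pPk k n ≤ pPk k m := by
  subst hm
  let F : {P : n.Partition // ∀ i ∈ P.parts, ∃ p : ℕ, p.Prime ∧ i = p ^ k} →
      {P : (n + Q.sum).Partition // ∀ i ∈ P.parts, ∃ p : ℕ, p.Prime ∧ i = p ^ k} := fun P =>
    ⟨{ parts := P.1.parts + Q
       parts_pos := by
         intro i hi
         rcases Multiset.mem_add.1 hi with h | h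
         · exact P.1.parts_pos h
         · obtain ⟨p, hp, rfl⟩ := hQ i h
           exact pow_pos hp.pos k
       parts_sum := by rw [Multiset.sum_add, P.1.parts_sum] }, by
      intro i hi
      rcases Multiset.mem_add.1 hi with h | h
      · exact P.2 i h
      · exact hQ i h⟩
  refine Nat.card_le_card_of_injective F fun P P' h => ?_
  have h1 : P.1.parts + Q = P'.1.parts + Q := congrArg (fun P => P.1.parts) h
  exact Subtype.ext (Nat.Partition.ext (add_right_cancel h1))

/-- As `2 ^ k` and `3 ^ k` are coprime, every large difference `n - m` is a nonnegative combination
of these two parts; hence `pPk k` is monotone along large steps. -/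
lemma exists_pPk_mono (k : ℕ) : ∃ M : ℕ, ∀ m n : ℕ, m + M ≤ n → pPk k m ≤ pPk k n := by
  refine ⟨2 ^ k * 3 ^ k, fun m n h => ?_⟩
  obtain ⟨d, rfl⟩ := Nat.exists_eq_add_of_le (le_trans (Nat.le_add_right _ _) h)
  have hd : 2 ^ k * 3 ^ k ≤ d := by omega
  have hcop : Nat.Coprime (2 ^ k) (3 ^ k) := Nat.Coprime.pow _ _ (by norm_num)
  obtain ⟨a, b, hab⟩ : ∃ a b : ℕ, a * 2 ^ k + b * 3 ^ k = d :=
    Nat.exists_add_mul_eq_of_gcd_dvd_of_mul_pred_le _ _ d (by rw [hcop.gcd_eq_one]; exact one_dvd d)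
      ((Nat.mul_le_mul (Nat.pred_le _) (Nat.pred_le _)).trans hd)
  refine pPk_add_le (Multiset.replicate a (2 ^ k) + Multiset.replicate b (3 ^ k)) ?_ ?_
  · intro i hi
    rcases Multiset.mem_add.1 hi with h | h
    · exact ⟨2, Nat.prime_two, Multiset.eq_of_mem_replicate h⟩
    · exact ⟨3, Nat.prime_three, Multiset.eq_of_mem_replicate h⟩
  · simp [hab]

/-! ### A Tauberian theorem for logarithms of coefficients -/

/-- Parameters for the tail estimates in `tauber`. With `φ c = c ^ (-a) / a`, whose derivative at `1` is `-1`, the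
first inequality between values of `φ` is strict convexity at `1`, the second holds for small `t`
because `w < 1`, and the third holds for `t` near `0` and `w` near `1`. -/
lemma exists_tilt {a δ : ℝ} (ha : 0 < a) (hδ : 0 < δ) :
    ∃ t w : ℝ, 0 < t ∧ 0 < w ∧ w < 1 ∧ 0 < (1 + t) ^ (-a) / a - (1 : ℝ) ^ (-a) / a + t ∧
      0 < (1 + t) ^ (-a) / a - (1 + 2 * t) ^ (-a) / a - t * w ∧
      1 + 1 / a - δ < (1 + t) ^ (-a) / a + (1 + t) * w := by
  set w : ℝ := max (1 - δ / 2) (1 / 2) with hw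
  have hw0 : 0 < w := lt_max_of_lt_right (by norm_num)
  have hw1 : w < 1 := max_lt (by linarith) (by norm_num)
  have hw2 : 1 - δ / 2 ≤ w := le_max_left _ _
  have d1 : ∀ c : ℝ, HasDerivAt (fun t : ℝ => (1 + c * t) ^ (-a) / a) (-c) 0 := by
    intro c
    have h := ((((hasDerivAt_id (0 : ℝ)).const_mul c).const_add 1).rpow_const (p := -a)
      (Or.inl (by simp))).div_const a
    refine h.congr_deriv ?_
    simp only [id, mul_zero, add_zero, Real.one_rpow]
    field_simp
  have d2 := (d1 1).sub (d1 2)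
  have e2 : ∀ᶠ t : ℝ in 𝓝[>] 0, 0 < (1 + t) ^ (-a) / a - (1 + 2 * t) ^ (-a) / a - t * w := by
    have h := (hasDerivAt_iff_tendsto_slope.1 d2).mono_left
      (nhdsWithin_mono 0 (fun x (hx : 0 < x) => hx.ne'))
    have h' := h.eventually_const_lt (show w < -1 - -2 by linarith)
    filter_upwards [h', self_mem_nhdsWithin] with t ht ht0
    have ht0' : 0 < t := ht0
    rw [slope_def_field, lt_div_iff₀ (by linarith)] at ht
    simp only [Pi.sub_apply, mul_zero, sub_self, sub_zero, one_mul] at ht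
    linarith
  have e3 : ∀ᶠ t : ℝ in 𝓝[>] 0, 1 + 1 / a - δ < (1 + t) ^ (-a) / a + (1 + t) * w := by
    have h : ContinuousAt (fun t : ℝ => (1 + 1 * t) ^ (-a) / a + (1 + t) * w) 0 :=
      (d1 1).continuousAt.add (by fun_prop)
    have h2 := h.tendsto.eventually_const_lt (u := 1 + 1 / a - δ) (by
      simp only [mul_zero, add_zero, Real.one_rpow]; linarith)
    filter_upwards [h2.filter_mono nhdsWithin_le_nhds] with t ht
    simpa using ht
  obtain ⟨t, h2, h3, h0⟩ := (e2.and (e3.and self_mem_nhdsWithin)).exists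
  have ht0 : 0 < t := h0
  refine ⟨t, w, ht0, hw0, hw1, ?_, h2, h3⟩
  have h4 := Real.log_lt_sub_one_of_pos (by linarith : 0 < 1 + t) (by linarith)
  have h5 := Real.add_one_le_exp (Real.log (1 + t) * -a)
  rw [← Real.rpow_def_of_pos (by linarith)] at h5
  have h6 : 1 - a * t < (1 + t) ^ (-a) := by nlinarith
  rw [Real.one_rpow]
  have h7 : (1 - a * t) / a < (1 + t) ^ (-a) / a := div_lt_div_of_pos_right h6 ha
  have h8 : (1 - a * t) / a = 1 / a - t := by field_simp
  linarith

/-- A Tauberian theorem for the logarithm of the coefficients of `exp (F σ) = ∑ p m * exp (-σ m)`.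

The upper bound `p n ≤ exp (F (s n) + n * s n)` is trivial. For the lower bound, evaluate the sum at
the slightly larger `σ = (1 + t) * s n`. Compared with the sums at `s n` and at `(1 + 2 t) * s n`, the
terms with `m > n - M` and those with `m ≤ w * n` contribute at most a third of the total each; so the
terms with `w * n < m ≤ n - M` carry a third of it. There are at most `n + 1` of these, and in each
`p m ≤ p n` by monotonicity along steps of length at least `M`. -/
theorem tauber {p : ℕ → ℝ} {F : ℝ → ℝ} {s : ℕ → ℝ} {a : ℝ} {M : ℕ}
    (hp : ∀ n, 0 ≤ p n) (ha : 0 < a) (hs : ∀ᶠ n in atTop, 0 < s n)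
    (hF : ∀ σ, 0 < σ → HasSum (fun m : ℕ => p m * Real.exp (-(σ * m))) (Real.exp (F σ)))
    (hmono : ∀ m n : ℕ, m + M ≤ n → p m ≤ p n)
    (hs0 : Tendsto s atTop (𝓝 0))
    (hL : Tendsto (fun n : ℕ => (n : ℝ) * s n) atTop atTop)
    (hlog : Tendsto (fun n : ℕ => Real.log n / ((n : ℝ) * s n)) atTop (𝓝 0))
    (hFc : ∀ c : ℝ, 0 < c →
      Tendsto (fun n : ℕ => F (c * s n) / ((n : ℝ) * s n)) atTop (𝓝 (c ^ (-a) / a))) :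
    (∀ᶠ n in atTop, 0 < p n) ∧
      Tendsto (fun n : ℕ => Real.log (p n) / ((n : ℝ) * s n)) atTop (𝓝 (1 + 1 / a)) := by
  have hLpos := hL.eventually_gt_atTop 0
  -- A quantity whose ratio to `n * s n` has a positive limit tends to infinity.
  have grow : ∀ (G : ℕ → ℝ) (c : ℝ), 0 < c →
      Tendsto (fun n : ℕ => G n / ((n : ℝ) * s n)) atTop (𝓝 c) → Tendsto G atTop atTop := by
    intro G c hc h
    refine (h.pos_mul_atTop hc hL).congr' ?_
    filter_upwards [hLpos] with n hn
    exact div_mul_cancel₀ _ hn.ne'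
  have lower : ∀ δ : ℝ, 0 < δ →
      ∀ᶠ n : ℕ in atTop, Real.exp ((1 + 1 / a - δ) * ((n : ℝ) * s n)) ≤ p n := by
    intro δ hδ
    obtain ⟨t, w, ht, hw0, hw1, h1, h2, h3⟩ := exists_tilt ha hδ
    have hu : 0 < 1 + t := by linarith
    have hv : 0 < 1 + 2 * t := by linarith
    have g1 : Tendsto (fun n : ℕ => F ((1 + t) * s n) - F (1 * s n) + t * (n * s n)
        - t * M * s n) atTop atTop := by
      have := (grow (fun n : ℕ => F ((1 + t) * s n) - F (1 * s n) + t * (n * s n)) _ h1 ?_).atTop_add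
        (hs0.const_mul (-(t * M)))
      · refine this.congr fun n => by ring
      · refine (((hFc _ hu).sub (hFc 1 one_pos)).add_const t).congr' ?_
        filter_upwards [hLpos] with n hn
        rw [add_div, sub_div, mul_div_cancel_right₀ _ hn.ne']
    have g2 : Tendsto (fun n : ℕ => F ((1 + t) * s n) - F ((1 + 2 * t) * s n) - t * w * (n * s n))
        atTop atTop := by
      refine grow _ _ h2 ?_
      refine (((hFc _ hu).sub (hFc _ hv)).sub_const (t * w)).congr' ?_
      filter_upwards [hLpos] with n hn
      rw [sub_div, sub_div, mul_div_cancel_right₀ _ hn.ne']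
    have g3 : Tendsto (fun n : ℕ => (F ((1 + t) * s n) + (1 + t) * w * (n * s n)
        - Real.log 6 - Real.log n) / (n * s n)) atTop
        (𝓝 ((1 + t) ^ (-a) / a + (1 + t) * w)) := by
      have := (((hFc _ hu).add_const ((1 + t) * w)).sub
        (hL.const_div_atTop (Real.log 6))).sub hlog
      rw [sub_zero, sub_zero] at this
      refine this.congr' ?_
      filter_upwards [hLpos] with n hn
      rw [sub_div, sub_div, add_div, mul_div_cancel_right₀ _ hn.ne']
    filter_upwards [hs, hLpos, g1.eventually_ge_atTop (Real.log 3),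
      g2.eventually_ge_atTop (Real.log 3), g3.eventually_const_lt h3, eventually_ge_atTop 1]
      with n hsn hLn e1 e2 e3 hn1
    have hn1' : (1 : ℝ) ≤ n := by exact_mod_cast hn1
    set Z := Real.exp (F ((1 + t) * s n)) with hZ
    have hA := (hF (1 * s n) (by linarith)).mul_right (Real.exp (-(t * s n * (n - M))))
    have hB := (hF ((1 + 2 * t) * s n) (by positivity)).mul_right (Real.exp (t * w * (n * s n)))
    have hC : HasSum (fun m : ℕ => if m ∈ Finset.range (n + 1) then
        p n * Real.exp (-((1 + t) * w * (n * s n))) else 0)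
        ((n + 1) * (p n * Real.exp (-((1 + t) * w * (n * s n))))) := by
      have := hasSum_sum_of_ne_finset_zero (L := .unconditional ℕ) (s := Finset.range (n + 1))
        (f := fun m : ℕ => if m ∈ Finset.range (n + 1) then
          p n * Real.exp (-((1 + t) * w * (n * s n))) else 0) (fun m hm => if_neg hm)
      rw [Finset.sum_ite_mem, Finset.inter_self, Finset.sum_const, Finset.card_range,
        nsmul_eq_mul] at this
      exact_mod_cast this
    -- Each term is either in one of the two negligible tails or in the window `w n < m ≤ n - M`.
    have hle := hasSum_le (fun m => ?_) (hF ((1 + t) * s n) (by positivity)) ((hA.add hB).add hC)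
    · have bA : Real.exp (F (1 * s n)) * Real.exp (-(t * s n * (n - M))) ≤ Z / 3 := by
        rw [← Real.exp_add, hZ, le_div_iff₀ (by norm_num), ← Real.exp_log (by norm_num : (0:ℝ) < 3),
          ← Real.exp_add]
        exact Real.exp_le_exp.2 (by linarith)
      have bB : Real.exp (F ((1 + 2 * t) * s n)) * Real.exp (t * w * (n * s n)) ≤ Z / 3 := by
        rw [← Real.exp_add, hZ, le_div_iff₀ (by norm_num), ← Real.exp_log (by norm_num : (0:ℝ) < 3),
          ← Real.exp_add]
        exact Real.exp_le_exp.2 (by linarith)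
      have bC : Z / 3 ≤ (n + 1) * (p n * Real.exp (-((1 + t) * w * (n * s n)))) := by linarith
      have bD : Z / 3 ≤ 2 * n * (p n * Real.exp (-((1 + t) * w * (n * s n)))) :=
        bC.trans (mul_le_mul_of_nonneg_right (by linarith)
          (mul_nonneg (hp n) (Real.exp_pos _).le))
      rw [lt_div_iff₀ hLn] at e3
      calc Real.exp ((1 + 1 / a - δ) * (n * s n))
          ≤ Real.exp (F ((1 + t) * s n) + (1 + t) * w * (n * s n) - Real.log 6 - Real.log n) :=
            Real.exp_le_exp.2 e3.le
        _ = Z / 3 * Real.exp ((1 + t) * w * (n * s n)) / (2 * n) := by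
            rw [Real.exp_sub, Real.exp_sub, Real.exp_add, Real.exp_log (by norm_num),
              Real.exp_log (by linarith), hZ]
            field_simp
            norm_num
        _ ≤ 2 * n * (p n * Real.exp (-((1 + t) * w * (n * s n)))) *
              Real.exp ((1 + t) * w * (n * s n)) / (2 * n) := by gcongr
        _ = p n := by
            rw [Real.exp_neg]
            field_simp
    · have q0 := hp m
      have pA : 0 ≤ p m * Real.exp (-(1 * s n * m)) * Real.exp (-(t * s n * (n - M))) := by
        positivity
      have pB : 0 ≤ p m * Real.exp (-((1 + 2 * t) * s n * m)) * Real.exp (t * w * (n * s n)) := by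
        positivity
      have pC : 0 ≤ if m ∈ Finset.range (n + 1) then
          p n * Real.exp (-((1 + t) * w * (n * s n))) else 0 := by
        have := hp n
        split_ifs <;> positivity
      rcases lt_or_ge n (m + M) with hm | hm
      · have hm' : (n : ℝ) - M ≤ m := by
          have : (n : ℝ) ≤ m + M := by exact_mod_cast hm.le
          linarith
        have : p m * Real.exp (-((1 + t) * s n * m)) ≤
            p m * Real.exp (-(1 * s n * m)) * Real.exp (-(t * s n * (n - M))) := by
          rw [mul_assoc (p m) (Real.exp _) (Real.exp _), ← Real.exp_add]
          refine mul_le_mul_of_nonneg_left (Real.exp_le_exp.2 ?_) q0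
          have := mul_le_mul_of_nonneg_left hm' (mul_pos ht hsn).le
          linarith
        linarith
      rcases le_or_gt (m : ℝ) (w * n) with hmw | hmw
      · have : p m * Real.exp (-((1 + t) * s n * m)) ≤
            p m * Real.exp (-((1 + 2 * t) * s n * m)) * Real.exp (t * w * (n * s n)) := by
          rw [mul_assoc (p m) (Real.exp _) (Real.exp _), ← Real.exp_add]
          refine mul_le_mul_of_nonneg_left (Real.exp_le_exp.2 ?_) q0
          have := mul_le_mul_of_nonneg_left hmw (mul_pos ht hsn).le
          linarith
        linarith
      · rw [if_pos (Finset.mem_range.2 (by omega))] at pC ⊢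
        have : p m * Real.exp (-((1 + t) * s n * m)) ≤
            p n * Real.exp (-((1 + t) * w * (n * s n))) := by
          refine mul_le_mul (hmono m n hm) (Real.exp_le_exp.2 ?_) (Real.exp_pos _).le (hp n)
          have := mul_le_mul_of_nonneg_left hmw.le (mul_pos hu hsn).le
          linarith
        linarith
  have hpos : ∀ᶠ n in atTop, 0 < p n :=
    (lower 1 one_pos).mono fun n hn => (Real.exp_pos _).trans_le hn
  refine ⟨hpos, tendsto_order.2 ⟨fun b hb => ?_, fun b hb => ?_⟩⟩
  · filter_upwards [lower ((1 + 1 / a - b) / 2) (by linarith), hLpos, hpos] with n h hn hpn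
    rw [lt_div_iff₀ hn]
    have h' := (Real.le_log_iff_exp_le hpn).2 h
    refine lt_of_lt_of_le ?_ h'
    exact mul_lt_mul_of_pos_right (by linarith) hn
  · have h1 := (hFc 1 one_pos).const_add 1
    rw [Real.one_rpow] at h1
    filter_upwards [h1.eventually_lt_const hb, hLpos, hpos, hs] with n h hn hpn hsn
    refine lt_of_le_of_lt ?_ h
    rw [div_le_iff₀ hn, add_mul, one_mul, div_mul_cancel₀ _ hn.ne']
    have h2 : p n * Real.exp (-(1 * s n * n)) ≤ Real.exp (F (1 * s n)) :=
      le_hasSum (hF (1 * s n) (by linarith)) n fun m _ => mul_nonneg (hp m) (Real.exp_pos _).le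
    rw [← Real.exp_log hpn, ← Real.exp_add, Real.exp_le_exp] at h2
    linarith

/-! ### The approximate saddle point and the logarithmic asymptotics -/

/-- The scale `n ^ (1 / (k + 1)) * (log n) ^ (-k / (k + 1))` of `log (pPk k n)`. -/
noncomputable def expScale (k n : ℕ) : ℝ :=
  (n : ℝ) ^ ((1 : ℝ) / ((k : ℝ) + 1)) * Real.log n ^ (-(k : ℝ) / ((k : ℝ) + 1))

/-- The approximate saddle point `(B / (n log n)) ^ (k / (k + 1))`. -/
noncomputable def saddle (k : ℕ) (B : ℝ) (n : ℕ) : ℝ :=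
  (B / (n * Real.log n)) ^ ((k : ℝ) / ((k : ℝ) + 1))

lemma tendsto_log_natCast : Tendsto (fun n : ℕ => Real.log n) atTop atTop :=
  Real.tendsto_log_atTop.comp tendsto_natCast_atTop_atTop

lemma tendsto_loglog_div : Tendsto (fun n : ℕ => Real.log (Real.log n) / Real.log n) atTop (𝓝 0) :=
  (Real.isLittleO_log_id_atTop.tendsto_div_nhds_zero).comp tendsto_log_natCast

lemma eventually_nat_log_pos : ∀ᶠ n : ℕ in atTop, (0 : ℝ) < n ∧ 0 < Real.log n :=
  (tendsto_natCast_atTop_atTop.eventually_gt_atTop 0).and (tendsto_log_natCast.eventually_gt_atTop 0)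

lemma tendsto_log_div_expScale (k : ℕ) :
    Tendsto (fun n : ℕ => Real.log n / expScale k n) atTop (𝓝 0) := by
  have hk : (0 : ℝ) < (k : ℝ) + 1 := by positivity
  have h := ((isLittleO_log_rpow_rpow_atTop (1 + (k : ℝ) / ((k : ℝ) + 1))
    (one_div_pos.2 hk)).tendsto_div_nhds_zero).comp tendsto_natCast_atTop_atTop (α := ℕ)
  refine h.congr' ?_
  filter_upwards [eventually_nat_log_pos] with n hn
  simp only [Function.comp, expScale]
  rw [Real.rpow_add hn.2, Real.rpow_one, neg_div, Real.rpow_neg hn.2.le]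
  have := (Real.rpow_pos_of_pos hn.2 ((k : ℝ) / ((k : ℝ) + 1))).ne'
  have := (Real.rpow_pos_of_pos hn.1 (1 / ((k : ℝ) + 1))).ne'
  field_simp

lemma eventually_expScale_pos (k : ℕ) : ∀ᶠ n : ℕ in atTop, 0 < expScale k n := by
  filter_upwards [eventually_nat_log_pos] with n hn
  exact mul_pos (Real.rpow_pos_of_pos hn.1 _) (Real.rpow_pos_of_pos hn.2 _)

lemma natCast_mul_saddle (k : ℕ) {B : ℝ} (hB : 0 < B) : ∀ᶠ n : ℕ in atTop,
    (n : ℝ) * saddle k B n = B ^ ((k : ℝ) / ((k : ℝ) + 1)) * expScale k n := by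
  filter_upwards [eventually_nat_log_pos] with n hn
  have hk : (0 : ℝ) < (k : ℝ) + 1 := by positivity
  rw [saddle, expScale, Real.div_rpow hB.le (mul_pos hn.1 hn.2).le, Real.mul_rpow hn.1.le hn.2.le,
    neg_div, Real.rpow_neg hn.2.le,
    show (1 : ℝ) / ((k : ℝ) + 1) = 1 - (k : ℝ) / ((k : ℝ) + 1) by field_simp; ring,
    Real.rpow_sub hn.1, Real.rpow_one]
  have := (Real.rpow_pos_of_pos hn.2 ((k : ℝ) / ((k : ℝ) + 1))).ne'
  have := (Real.rpow_pos_of_pos hn.1 ((k : ℝ) / ((k : ℝ) + 1))).ne'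
  field_simp

lemma saddle_pos (k : ℕ) {B : ℝ} (hB : 0 < B) : ∀ᶠ n : ℕ in atTop, 0 < saddle k B n := by
  filter_upwards [eventually_nat_log_pos] with n hn
  exact Real.rpow_pos_of_pos (div_pos hB (mul_pos hn.1 hn.2)) _

lemma tendsto_saddle {k : ℕ} (hk : 1 ≤ k) (B : ℝ) : Tendsto (saddle k B) atTop (𝓝 0) := by
  have hk0 : (0 : ℝ) < k := by exact_mod_cast hk
  have h1 : Tendsto (fun n : ℕ => B / (n * Real.log n)) atTop (𝓝 0) :=
    (tendsto_natCast_atTop_atTop.atTop_mul_atTop₀ tendsto_log_natCast).const_div_atTop B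
  have hpos : 0 < (k : ℝ) / ((k : ℝ) + 1) := by positivity
  have h2 := (Real.continuousAt_rpow_const 0 ((k : ℝ) / ((k : ℝ) + 1))
    (Or.inr hpos.le)).tendsto.comp h1
  rw [Real.zero_rpow hpos.ne'] at h2
  exact h2

lemma tendsto_log_div_natCast_mul_saddle (k : ℕ) {B : ℝ} (hB : 0 < B) :
    Tendsto (fun n : ℕ => Real.log n / ((n : ℝ) * saddle k B n)) atTop (𝓝 0) := by
  have h := (tendsto_log_div_expScale k).mul_const (B ^ ((k : ℝ) / ((k : ℝ) + 1)))⁻¹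
  rw [zero_mul] at h
  refine h.congr' ?_
  filter_upwards [natCast_mul_saddle k hB] with n hn
  rw [hn, ← div_eq_mul_inv, div_div, mul_comm]

lemma tendsto_natCast_mul_saddle (k : ℕ) {B : ℝ} (hB : 0 < B) :
    Tendsto (fun n : ℕ => (n : ℝ) * saddle k B n) atTop atTop := by
  have h1 : Tendsto (fun n : ℕ => Real.log n / ((n : ℝ) * saddle k B n)) atTop (𝓝[>] 0) := by
    refine tendsto_nhdsWithin_iff.2 ⟨tendsto_log_div_natCast_mul_saddle k hB, ?_⟩
    filter_upwards [eventually_nat_log_pos, saddle_pos k hB] with n hn hs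
    exact div_pos hn.2 (mul_pos hn.1 hs)
  refine ((tendsto_inv_nhdsGT_zero.comp h1).atTop_mul_atTop₀ tendsto_log_natCast).congr' ?_
  filter_upwards [eventually_nat_log_pos] with n hn
  simp only [Function.comp, inv_div]
  exact div_mul_cancel₀ _ hn.2.ne'

lemma tendsto_log_saddle (k : ℕ) {B c : ℝ} (hB : 0 < B) (hc : 0 < c) :
    Tendsto (fun n : ℕ => Real.log (c * saddle k B n)⁻¹ / Real.log n) atTop
      (𝓝 ((k : ℝ) / ((k : ℝ) + 1))) := by
  set κ := (k : ℝ) / ((k : ℝ) + 1) with hκ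
  have h1 := ((tendsto_loglog_div.const_add 1).const_mul κ).add
    (tendsto_log_natCast.const_div_atTop (-(κ * Real.log B) - Real.log c))
  rw [add_zero, add_zero, mul_one] at h1
  refine h1.congr' ?_
  filter_upwards [eventually_nat_log_pos, saddle_pos k hB] with n hn hs
  rw [Real.log_inv, Real.log_mul hc.ne' hs.ne', saddle,
    Real.log_rpow (div_pos hB (mul_pos hn.1 hn.2)), Real.log_div hB.ne' (mul_pos hn.1 hn.2).ne',
    Real.log_mul hn.1.ne' hn.2.ne', ← hκ]
  have := hn.2.ne'
  field_simp
  ring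

/-- With `B = A (1 + 1 / k) / k`, where `A = partConst k`, the rescaled `logEuler` at the approximate
saddle point has limit `c ^ (-a) / a`, `a = 1 / k`. -/
lemma tendsto_logEuler_saddle {k : ℕ} (hk : 1 ≤ k) {B : ℝ}
    (hB : B = (k : ℝ)⁻¹ * partConst k * (1 + (k : ℝ)⁻¹)) {c : ℝ} (hc : 0 < c) :
    Tendsto (fun n : ℕ => logEuler k (c * saddle k B n) / ((n : ℝ) * saddle k B n)) atTop
      (𝓝 (c ^ (-(k : ℝ)⁻¹) / (k : ℝ)⁻¹)) := by
  have hk0 : (0 : ℝ) < k := by exact_mod_cast hk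
  have hA := partConst_pos hk
  have hB0 : 0 < B := by rw [hB]; positivity
  have t0 : Tendsto (fun n : ℕ => c * saddle k B n) atTop (𝓝[>] 0) := by
    refine tendsto_nhdsWithin_iff.2 ⟨?_, ?_⟩
    · simpa using (tendsto_saddle hk B).const_mul c
    · filter_upwards [saddle_pos k hB0] with n hs using mul_pos hc hs
  have t1 := (tendsto_logEuler hk).comp t0
  have t2 := ((tendsto_log_saddle k hB0 hc).const_mul (c ^ ((k : ℝ)⁻¹) * B))
  have t3 := t1.div t2 (by positivity)
  have hlim : partConst k / (c ^ ((k : ℝ)⁻¹) * B * ((k : ℝ) / ((k : ℝ) + 1))) =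
      c ^ (-(k : ℝ)⁻¹) / (k : ℝ)⁻¹ := by
    rw [hB, Real.rpow_neg hc.le]
    have := (Real.rpow_pos_of_pos hc ((k : ℝ)⁻¹)).ne'
    generalize c ^ ((k : ℝ)⁻¹) = C at *
    field_simp
  rw [hlim] at t3
  refine t3.congr' ?_
  filter_upwards [eventually_nat_log_pos, saddle_pos k hB0,
    (tendsto_log_saddle k hB0 hc).eventually_const_lt (u := 0) (by positivity)] with n hn hs hl
  have hl' : Real.log (c * saddle k B n)⁻¹ ≠ 0 := by
    intro h; rw [h] at hl; simp at hl
  have hs1 : saddle k B n ^ ((k : ℝ)⁻¹) * saddle k B n = B / (n * Real.log n) := by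
    rw [← Real.rpow_add_one hs.ne', saddle, ← Real.rpow_mul (div_pos hB0 (mul_pos hn.1 hn.2)).le]
    rw [show (k : ℝ) / ((k : ℝ) + 1) * ((k : ℝ)⁻¹ + 1) = 1 by field_simp; ring, Real.rpow_one]
  simp only [Function.comp, Pi.div_apply]
  rw [Real.mul_rpow hc.le hs.le]
  have h1 := (Real.rpow_pos_of_pos hc ((k : ℝ)⁻¹)).ne'
  have h2 := (Real.rpow_pos_of_pos hs ((k : ℝ)⁻¹)).ne'
  have hBe : B = saddle k B n ^ ((k : ℝ)⁻¹) * saddle k B n * (n * Real.log n) := by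
    rw [hs1, div_mul_cancel₀ _ (mul_pos hn.1 hn.2).ne']
  have h3 := hn.1.ne'
  have h4 := hn.2.ne'
  have h5 := hs.ne'
  generalize Real.log (c * saddle k B n)⁻¹ = l at *
  generalize logEuler k (c * saddle k B n) = f at *
  generalize saddle k B n ^ ((k : ℝ)⁻¹) = S at *
  generalize saddle k B n = σ at *
  generalize c ^ ((k : ℝ)⁻¹) = C at *
  generalize Real.log n = N at *
  rw [hBe]
  field_simp

/-- The logarithmic asymptotics of the number of partitions into `k`-th powers of primes. -/
theorem tendsto_log_pPk {k : ℕ} (hk : 1 ≤ k) : ∃ C : ℝ, 0 < C ∧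
    (∀ᶠ n : ℕ in atTop, (0 : ℝ) < pPk k n) ∧
    Tendsto (fun n : ℕ => Real.log (pPk k n) / (C * expScale k n)) atTop (𝓝 1) := by
  have hk0 : (0 : ℝ) < k := by exact_mod_cast hk
  have hA := partConst_pos hk
  obtain ⟨B, hB⟩ : ∃ B, B = (k : ℝ)⁻¹ * partConst k * (1 + (k : ℝ)⁻¹) := ⟨_, rfl⟩
  have hB0 : 0 < B := by rw [hB]; positivity
  obtain ⟨M, hM⟩ := exists_pPk_mono k
  obtain ⟨h1, h2⟩ := tauber (p := fun n => (pPk k n : ℝ)) (F := logEuler k) (s := saddle k B)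
    (a := (k : ℝ)⁻¹) (M := M) (fun n => Nat.cast_nonneg _) (inv_pos.2 hk0) (saddle_pos k hB0)
    (fun σ hσ => hasSum_pPk hk hσ) (fun m n h => by exact_mod_cast hM m n h)
    (tendsto_saddle hk B) (tendsto_natCast_mul_saddle k hB0)
    (tendsto_log_div_natCast_mul_saddle k hB0) (fun c hc => tendsto_logEuler_saddle hk hB hc)
  rw [one_div, inv_inv] at h2
  refine ⟨(1 + k) * B ^ ((k : ℝ) / ((k : ℝ) + 1)), by positivity, h1, ?_⟩
  have h3 := h2.div_const (1 + (k : ℝ))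
  rw [div_self (by positivity)] at h3
  refine h3.congr' ?_
  filter_upwards [natCast_mul_saddle k hB0] with n hn
  rw [hn, div_div]
  congr 1
  ring

end

/-- Theorem 1.1: `p_{ℙ_k}(n) ~ C₁ n^{-(2k+1)/(2k+2)} (log n)^{-k/(2k+2)}
    exp(C₂ n^{1/(k+1)} (log n)^{-k/(k+1)} (1+o(1)))`. -/
theorem stmt0 (k : ℕ) (hk : 1 ≤ k) :
    ∃ C₁ C₂ : ℝ, 0 < C₁ ∧ 0 < C₂ ∧ ∃ ε : ℕ → ℝ,
      Tendsto ε atTop (nhds 0) ∧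
      Tendsto (fun n : ℕ =>
          (pPk k n : ℝ) /
            (C₁ * (n : ℝ) ^ (-(2 * (k : ℝ) + 1) / (2 * (k : ℝ) + 2)) *
              Real.log n ^ (-(k : ℝ) / (2 * (k : ℝ) + 2)) *
              Real.exp (C₂ * (n : ℝ) ^ ((1 : ℝ) / ((k : ℝ) + 1)) *
                Real.log n ^ (-(k : ℝ) / ((k : ℝ) + 1)) * (1 + ε n))))
        atTop (nhds 1) := by
  obtain ⟨C, hC, hpos, hlim⟩ := tendsto_log_pPk hk
  set α : ℝ := -(2 * (k : ℝ) + 1) / (2 * (k : ℝ) + 2)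
  set β : ℝ := -(k : ℝ) / (2 * (k : ℝ) + 2)
  -- As `ε` is free, `C₁ = 1` may be taken: the powers of `n` and `log n` are `exp (o (expScale k n))`,
  -- and the `ε` below makes the quotient equal to `1` for all large `n`.
  refine ⟨1, C, one_pos, hC, fun n => (Real.log (pPk k n) -
    (α * Real.log n + β * Real.log (Real.log n))) / (C * expScale k n) - 1, ?_, ?_⟩
  · have h1 := (tendsto_log_div_expScale k).const_mul (α / C)
    have h2 := (tendsto_loglog_div.mul (tendsto_log_div_expScale k)).const_mul (β / C)
    have h3 := ((hlim.sub h1).sub h2).sub_const 1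
    simp only [mul_zero, sub_zero, sub_self] at h3
    refine h3.congr' ?_
    filter_upwards [eventually_nat_log_pos, eventually_expScale_pos k] with n hn hE
    have h4 := hn.2.ne'
    have h5 := hE.ne'
    have h6 := hC.ne'
    field_simp
    ring
  · refine tendsto_const_nhds.congr' ?_
    filter_upwards [eventually_nat_log_pos, eventually_expScale_pos k, hpos] with n hn hE hp
    have h1 : C * (n : ℝ) ^ ((1 : ℝ) / ((k : ℝ) + 1)) * Real.log n ^ (-(k : ℝ) / ((k : ℝ) + 1)) =
        C * expScale k n := by rw [expScale, mul_assoc]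
    rw [h1, add_sub_cancel, mul_div_cancel₀ _ (mul_pos hC hE).ne', Real.exp_sub, Real.exp_log hp,
      Real.exp_add, mul_comm α, mul_comm β, ← Real.rpow_def_of_pos hn.1,
      ← Real.rpow_def_of_pos hn.2, one_mul, mul_div_cancel₀ _ (mul_pos (Real.rpow_pos_of_pos hn.1 α)
      (Real.rpow_pos_of_pos hn.2 β)).ne', div_self hp.ne']
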